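/- Let Ψ be a critical branching mechanism satisfying Grey's condition, and let (μ_t)_{t>0} be the fundamental solution associated with Ψ, i.e. a family of finite Borel measures on (0,∞) such that Φ(t,q) = ∫_{(0,∞)} (1 − e^{−qx}) μ_t(dx) satisfies ∂_t Φ(t,q) = −Ψ(Φ(t,q)) for t > 0, q > 0, with Φ(t,q) → q as t → 0⁺. Suppose there exist a function λ : (0,∞) → (0,∞) and a Borel probability measure μ̂ on (0,∞) such that for every bounded continuous f : (0,∞) → ℝ, μ_t((0,∞))^{−1} ∫_{(0,∞)} f(λ(t) x) μ_t(dx) → ∫_{(0,∞)} f dμ̂ as t → ∞. Then there exists γ ∈ (1,2] such that Ψ is regularly varying at 0 with index γ. Furthermore, m₁ := ∫_{(0,∞)} x μ̂(dx) < ∞, λ(t)/μ_t((0,∞)) → m₁ as t → ∞, and ∫_{(0,∞)} (1 − e^{−qx}) μ̂(dx) = (1 + (m₁ q)^{−(γ−1)})^{−1/(γ−1)} for all q > 0. -/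

import Mathlib

open MeasureTheory Set Filter

noncomputable section

/-! With `F u = ∫_u^∞ dv / Ψ v` the semiflow becomes a translation: `F (Φ(t, q)) = t + F q`, and
`F (μ_t (0, ∞)) = t`. Let `H` be the Bernstein transform of the limit law `μ̂`. By compactness `F`
has limits `R x = lim F (u * x) / F u` along ultrafilters `u → 0⁺`, and each of them satisfies
Abel's equation `R (H q) = 1 + R (m q)`, where `m = H' 0⁺` does not depend on the ultrafilter.
Abel's equation for the dilated ultrafilters reads `R (x * H q) = R x + R (x * m q)`; together these
identities force `R` to be multiplicative, hence a power, whose exponent `H` determines. So `F` is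
regularly varying, and since `F` is convex, so is `Ψ = -1 / F'`. -/

open scoped Topology

/-! ### Dilation limits and regular variation -/

/-- `R` is the limit of the rescaled functions `x ↦ F (u * x) / F u` on `(0, ∞)` as `u` runs along
the filter `𝓕`. Allowing an arbitrary filter makes room for subsequential limits: these are the
limits along the ultrafilters below `𝓝[>] 0`. -/
def HasDilationLimit (F : ℝ → ℝ) (𝓕 : Filter ℝ) (R : ℝ → ℝ) : Prop :=
  ∀ x, 0 < x → Tendsto (fun u => F (u * x) / F u) 𝓕 (𝓝 (R x))

/-- Regular variation at `0⁺` with index `ρ`. -/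
def RegularlyVaryingAtZero (f : ℝ → ℝ) (ρ : ℝ) : Prop :=
  HasDilationLimit f (𝓝[>] 0) (· ^ ρ)

lemma eventually_pos_nhdsGT_zero : ∀ᶠ u : ℝ in 𝓝[>] 0, 0 < u :=
  eventually_mem_nhdsWithin

lemma tendsto_mul_const_nhdsGT_zero {x : ℝ} (hx : 0 < x) :
    Tendsto (· * x) (𝓝[>] 0) (𝓝[>] 0) := by
  have h0 : Tendsto (· * x) (𝓝 0) (𝓝 0) := by
    simpa only [zero_mul] using (continuous_mul_const x).tendsto 0
  exact tendsto_nhdsWithin_iff.2 ⟨h0.mono_left nhdsWithin_le_nhds,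
    eventually_pos_nhdsGT_zero.mono fun u hu => mul_pos hu hx⟩

namespace HasDilationLimit

variable {F R : ℝ → ℝ} {𝓕 : Filter ℝ}

lemma map_one [NeBot 𝓕] (h : HasDilationLimit F 𝓕 R) (hF : ∀ᶠ u in 𝓕, F u ≠ 0) : R 1 = 1 := by
  refine tendsto_nhds_unique (h 1 one_pos) (tendsto_const_nhds.congr' ?_)
  filter_upwards [hF] with u hu
  rw [mul_one, div_self hu]

lemma antitoneOn [NeBot 𝓕] (h : HasDilationLimit F 𝓕 R) (h𝓕 : 𝓕 ≤ 𝓝[>] 0)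
    (hF : ∀ u, 0 < u → 0 < F u) (hanti : AntitoneOn F (Ioi 0)) : AntitoneOn R (Ioi 0) := by
  intro x (hx : 0 < x) y (hy : 0 < y) hxy
  refine le_of_tendsto_of_tendsto (h y hy) (h x hx) ?_
  filter_upwards [h𝓕 eventually_pos_nhdsGT_zero] with u hu
  have := hF u hu
  have := hanti (mul_pos hu hx) (mul_pos hu hy) (mul_le_mul_of_nonneg_left hxy hu.le)
  gcongr

lemma convexOn [NeBot 𝓕] (h : HasDilationLimit F 𝓕 R) (h𝓕 : 𝓕 ≤ 𝓝[>] 0)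
    (hF : ∀ u, 0 < u → 0 < F u) (hconv : ConvexOn ℝ (Ioi 0) F) : ConvexOn ℝ (Ioi 0) R := by
  refine ⟨convex_Ioi 0, fun x hx y hy a b ha hb hab => ?_⟩
  refine le_of_tendsto_of_tendsto (h _ (convex_Ioi 0 hx hy ha hb hab))
    (((h x hx).const_mul a).add ((h y hy).const_mul b)) ?_
  filter_upwards [h𝓕 eventually_pos_nhdsGT_zero] with u hu
  have hc := hconv.2 (mul_pos hu hx) (mul_pos hu hy) ha hb hab
  simp only [smul_eq_mul] at hc ⊢
  have e : u * (a * x + b * y) = a * (u * x) + b * (u * y) := by ring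
  rw [e, ← mul_div_assoc, ← mul_div_assoc, ← add_div]
  exact div_le_div_of_nonneg_right hc (hF u hu).le

lemma dilate (h : HasDilationLimit F 𝓕 R) (hF : ∀ᶠ u in 𝓕, F u ≠ 0) {x : ℝ} (hx : 0 < x)
    (hRx : R x ≠ 0) : HasDilationLimit F (𝓕.map (· * x)) (fun y => R (x * y) / R x) := by
  intro y hy
  rw [tendsto_map'_iff]
  refine ((h (x * y) (mul_pos hx hy)).div (h x hx) hRx).congr' ?_
  filter_upwards [hF] with u hu
  rw [Pi.div_apply, div_div_div_cancel_right₀ hu, Function.comp_apply, mul_assoc]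

lemma tendsto_comp (h : HasDilationLimit F 𝓕 R) (h𝓕 : 𝓕 ≤ 𝓝[>] 0)
    (hF : ∀ u, 0 < u → 0 < F u) (hanti : AntitoneOn F (Ioi 0)) {g : ℝ → ℝ} {c : ℝ} (hc : 0 < c)
    (hR : ContinuousAt R c) (hg : Tendsto (fun u => g u / u) 𝓕 (𝓝 c)) :
    Tendsto (fun u => F (g u) / F u) 𝓕 (𝓝 (R c)) := by
  have hpos := h𝓕 eventually_pos_nhdsGT_zero
  refine tendsto_order.2 ⟨fun a ha => ?_, fun a ha => ?_⟩
  · obtain ⟨x, hax, hcx : c < x⟩ := ((hR.continuousWithinAt (s := Ioi c)).eventually_const_lt ha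
      |>.and self_mem_nhdsWithin).exists
    filter_upwards [hpos, (h x (hc.trans hcx)).eventually_const_lt hax,
      hg.eventually_lt_const hcx, hg.eventually_const_lt hc] with u hu hau hgx hg0
    rw [div_lt_iff₀ hu] at hgx
    rw [lt_div_iff₀ hu, zero_mul] at hg0
    have := hF u hu
    have := hanti hg0 (mul_pos hu (hc.trans hcx)) (by linarith)
    exact hau.trans_le (by gcongr)
  · obtain ⟨x, hax, hx : 0 < x, hxc : x < c⟩ :=
      ((hR.continuousWithinAt (s := Iio c)).eventually_lt_const ha
        |>.and (Ioo_mem_nhdsLT hc)).exists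
    filter_upwards [hpos, (h x hx).eventually_lt_const hax,
      hg.eventually_const_lt hxc] with u hu hau hgx
    rw [lt_div_iff₀ hu] at hgx
    have := hF u hu
    have hux := mul_pos hu hx
    have := hanti hux (mem_Ioi.2 (by linarith)) (by linarith : u * x ≤ g u)
    exact lt_of_le_of_lt (by gcongr) hau

lemma tendsto_div_of_tendsto_comp (h : HasDilationLimit F 𝓕 R) (h𝓕 : 𝓕 ≤ 𝓝[>] 0)
    (hF : ∀ u, 0 < u → 0 < F u) (hanti : AntitoneOn F (Ioi 0)) {g : ℝ → ℝ} {c : ℝ} (hc : 0 < c)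
    (hR : StrictAntiOn R (Ioi 0)) (hg0 : ∀ᶠ u in 𝓕, 0 < g u)
    (hg : Tendsto (fun u => F (g u) / F u) 𝓕 (𝓝 (R c))) :
    Tendsto (fun u => g u / u) 𝓕 (𝓝 c) := by
  have hpos := h𝓕 eventually_pos_nhdsGT_zero
  refine tendsto_order.2 ⟨fun a ha => ?_, fun a ha => ?_⟩
  · have hm : 0 < max a (c / 2) := lt_max_of_lt_right (half_pos hc)
    have hmc : max a (c / 2) < c := max_lt ha (half_lt_self hc)
    filter_upwards [hpos, hg0, hg.eventually_lt (h _ hm) (hR hm hc hmc)] with u hu hgu hlt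
    rw [div_lt_div_iff_of_pos_right (hF u hu)] at hlt
    have := (le_max_left a (c / 2)).trans_lt
      ((lt_div_iff₀' hu).2 (hanti.reflect_lt hgu (mul_pos hu hm) hlt))
    exact this
  · have ha0 := hc.trans ha
    filter_upwards [hpos, hg0, (h a ha0).eventually_lt hg (hR hc ha0 ha)] with u hu hgu hlt
    rw [div_lt_div_iff_of_pos_right (hF u hu)] at hlt
    exact (div_lt_iff₀' hu).2 (hanti.reflect_lt (mul_pos hu ha0) hgu hlt)

end HasDilationLimit

/-! ### Descent times and their blow-ups -/

/-- The properties of the time `F u` a decreasing flow needs to come down from infinity to level `u`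
that the renewal argument uses; `s` bounds the order of growth of `F` at `0`. -/
structure IsDescentTime (F : ℝ → ℝ) (s : ℝ) : Prop where
  pos : ∀ u, 0 < u → 0 < F u
  strictAntiOn : StrictAntiOn F (Ioi 0)
  convexOn : ConvexOn ℝ (Ioi 0) F
  le_rpow_mul : ∀ u, 0 < u → ∀ b, 0 < b → b ≤ 1 → F (u * b) ≤ b ^ (-s) * F u
  tendsto_sub : ∀ b, 0 < b → b < 1 → Tendsto (fun u => F (u * b) - F u) (𝓝[>] 0) atTop

/-- The properties shared by all dilation limits at `0` of the descent times studied here. -/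
structure IsBlowUp (R : ℝ → ℝ) : Prop where
  pos : ∀ x, 0 < x → 0 < R x
  antitoneOn : AntitoneOn R (Ioi 0)
  convexOn : ConvexOn ℝ (Ioi 0) R
  map_one : R 1 = 1
  growth : ∃ ε, 0 < ε ∧ ∀ x, 0 < x → (1 + ε) * R x ≤ R (x / 4)

namespace IsDescentTime

variable {F : ℝ → ℝ} {s : ℝ}

lemma continuousOn (hF : IsDescentTime F s) : ContinuousOn F (Ioi 0) :=
  hF.convexOn.continuousOn isOpen_Ioi

lemma eventually_ne (hF : IsDescentTime F s) {𝓕 : Filter ℝ} (h𝓕 : 𝓕 ≤ 𝓝[>] 0) :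
    ∀ᶠ u in 𝓕, F u ≠ 0 :=
  h𝓕 (eventually_pos_nhdsGT_zero.mono fun u hu => (hF.pos u hu).ne')

lemma tendsto_atTop (hF : IsDescentTime F s) : Tendsto F (𝓝[>] 0) atTop := by
  have hhalf : Tendsto (fun u => F (u * 2⁻¹)) (𝓝[>] 0) atTop := by
    refine tendsto_atTop_mono' _ ?_ (hF.tendsto_sub 2⁻¹ (by norm_num) (by norm_num))
    filter_upwards [eventually_pos_nhdsGT_zero] with u hu
    linarith [hF.pos u hu]
  refine (hhalf.comp (tendsto_mul_const_nhdsGT_zero two_pos)).congr fun u => ?_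
  rw [Function.comp_apply, mul_inv_cancel_right₀ two_ne_zero]

lemma ratio_mem_uIcc (hF : IsDescentTime F s) {u x : ℝ} (hu : 0 < u) (hx : 0 < x) :
    F (u * x) / F u ∈ uIcc 1 (x ^ (-s)) := by
  have hFu := hF.pos u hu
  rcases le_total x 1 with hx1 | hx1
  · refine Icc_subset_uIcc ⟨(one_le_div hFu).2 ?_, (div_le_iff₀ hFu).2 ?_⟩
    · exact hF.strictAntiOn.antitoneOn (mul_pos hu hx) hu (mul_le_of_le_one_right hu.le hx1)
    · exact hF.le_rpow_mul u hu x hx hx1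
  · refine Icc_subset_uIcc' ⟨(le_div_iff₀ hFu).2 ?_, (div_le_one hFu).2 ?_⟩
    · have h := hF.le_rpow_mul (u * x) (mul_pos hu hx) x⁻¹ (inv_pos.2 hx)
        (inv_le_one_of_one_le₀ hx1)
      rw [mul_inv_cancel_right₀ hx.ne', Real.inv_rpow hx.le] at h
      exact (le_inv_mul_iff₀ (Real.rpow_pos_of_pos hx _)).1 h
    · exact hF.strictAntiOn.antitoneOn hu (mul_pos hu hx) (le_mul_of_one_le_right hu.le hx1)

lemma mem_uIcc_of_hasDilationLimit (hF : IsDescentTime F s) {𝓕 : Filter ℝ} [NeBot 𝓕]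
    (h𝓕 : 𝓕 ≤ 𝓝[>] 0) {R : ℝ → ℝ} (hR : HasDilationLimit F 𝓕 R) {x : ℝ} (hx : 0 < x) :
    R x ∈ uIcc 1 (x ^ (-s)) :=
  isClosed_Icc.mem_of_tendsto (hR x hx) <|
    h𝓕 <| eventually_pos_nhdsGT_zero.mono fun _ hu => hF.ratio_mem_uIcc hu hx

lemma exists_hasDilationLimit (hF : IsDescentTime F s) (𝓤 : Ultrafilter ℝ)
    (h𝓤 : ↑𝓤 ≤ 𝓝[>] (0 : ℝ)) : ∃ R, HasDilationLimit F 𝓤 R := by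
  have hlim : ∀ x, ∃ r, 0 < x → Tendsto (fun u => F (u * x) / F u) 𝓤 (𝓝 r) := by
    intro x
    by_cases hx : 0 < x
    · obtain ⟨r, -, hle⟩ := isCompact_uIcc.ultrafilter_le_nhds (𝓤.map fun u => F (u * x) / F u)
        (tendsto_principal.2 <|
          h𝓤 <| eventually_pos_nhdsGT_zero.mono fun _ hu => hF.ratio_mem_uIcc hu hx)
      exact ⟨r, fun _ => hle⟩
    · exact ⟨0, fun h => absurd h hx⟩
  choose R hR using hlim
  exact ⟨R, hR⟩

lemma le_div_four_of_hasDilationLimit (hF : IsDescentTime F s) {𝓕 : Filter ℝ} [NeBot 𝓕]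
    (h𝓕 : 𝓕 ≤ 𝓝[>] 0) {R : ℝ → ℝ} (hR : HasDilationLimit F 𝓕 R) {c : ℝ}
    (hgrowth : ∀ᶠ v in 𝓝[>] 0, c * F v ≤ F (v / 4)) {x : ℝ} (hx : 0 < x) :
    c * R x ≤ R (x / 4) := by
  refine le_of_tendsto_of_tendsto ((hR x hx).const_mul c) (hR (x / 4) (by positivity)) ?_
  filter_upwards [h𝓕 eventually_pos_nhdsGT_zero,
    h𝓕 ((tendsto_mul_const_nhdsGT_zero hx).eventually hgrowth)] with u hu hgu
  rw [← mul_div_assoc, ← mul_div_assoc]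
  exact div_le_div_of_nonneg_right hgu (hF.pos u hu).le

lemma isBlowUp (hF : IsDescentTime F s) {𝓕 : Filter ℝ} [NeBot 𝓕] (h𝓕 : 𝓕 ≤ 𝓝[>] 0)
    {R : ℝ → ℝ} (hR : HasDilationLimit F 𝓕 R)
    (hgrowth : ∃ ε, 0 < ε ∧ ∀ᶠ v in 𝓝[>] 0, (1 + ε) * F v ≤ F (v / 4)) : IsBlowUp R where
  pos _ hx := (lt_min one_pos (Real.rpow_pos_of_pos hx _)).trans_le
    (hF.mem_uIcc_of_hasDilationLimit h𝓕 hR hx).1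
  antitoneOn := hR.antitoneOn h𝓕 hF.pos hF.strictAntiOn.antitoneOn
  convexOn := hR.convexOn h𝓕 hF.pos hF.convexOn
  map_one := hR.map_one (hF.eventually_ne h𝓕)
  growth := hgrowth.imp fun _ hε =>
    ⟨hε.1, fun _ hx => hF.le_div_four_of_hasDilationLimit h𝓕 hR hε.2 hx⟩

end IsDescentTime

namespace IsBlowUp

variable {R : ℝ → ℝ}

lemma exists_pow_mul_le (hR : IsBlowUp R) :
    ∃ c, 1 < c ∧ ∀ (n : ℕ) (x : ℝ), 0 < x → c ^ n * R x ≤ R (x / 4 ^ n) := by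
  obtain ⟨ε, hε, hgrowth⟩ := hR.growth
  refine ⟨1 + ε, by linarith, fun n => ?_⟩
  induction n with
  | zero => intro x _; simp only [pow_zero, one_mul, div_one, le_refl]
  | succ n ih =>
    intro x hx
    calc (1 + ε) ^ (n + 1) * R x = (1 + ε) ^ n * ((1 + ε) * R x) := by ring
      _ ≤ (1 + ε) ^ n * R (x / 4) := by gcongr; exact hgrowth x hx
      _ ≤ R (x / 4 / 4 ^ n) := ih _ (by positivity)
      _ = R (x / 4 ^ (n + 1)) := by rw [div_div, pow_succ']

lemma exists_gt (hR : IsBlowUp R) (M : ℝ) : ∃ x, 0 < x ∧ M < R x := by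
  obtain ⟨c, hc, hpow⟩ := hR.exists_pow_mul_le
  obtain ⟨n, hn⟩ := pow_unbounded_of_one_lt M hc
  refine ⟨1 / 4 ^ n, by positivity, hn.trans_le ?_⟩
  simpa only [hR.map_one, mul_one] using hpow n 1 one_pos

lemma exists_lt (hR : IsBlowUp R) {δ : ℝ} (hδ : 0 < δ) : ∃ x, 0 < x ∧ R x < δ := by
  obtain ⟨c, hc, hpow⟩ := hR.exists_pow_mul_le
  obtain ⟨n, hn⟩ := pow_unbounded_of_one_lt δ⁻¹ hc
  refine ⟨4 ^ n, by positivity, ?_⟩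
  have h := hpow n (4 ^ n) (by positivity)
  rw [div_self (by positivity), hR.map_one, ← le_inv_mul_iff₀ (by positivity), mul_one] at h
  exact h.trans_lt (inv_lt_of_inv_lt₀ hδ hn)

lemma strictAntiOn (hR : IsBlowUp R) : StrictAntiOn R (Ioi 0) := by
  intro x (hx : 0 < x) y (hy : 0 < y) hxy
  by_contra! hle
  obtain ⟨ε, hε, hgrowth⟩ := hR.growth
  have hy4 : 0 < 4 * y := by positivity
  have hflat : R y ≤ R (4 * y) :=
    hR.convexOn.le_right_of_left_le'' hx hy4 hxy (by linarith) hle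
  have hg := hgrowth (4 * y) hy4
  rw [mul_div_cancel_left₀ y four_ne_zero] at hg
  nlinarith [hR.pos _ hy4]

lemma continuousOn (hR : IsBlowUp R) : ContinuousOn R (Ioi 0) :=
  hR.convexOn.continuousOn isOpen_Ioi

lemma exists_eq (hR : IsBlowUp R) {r : ℝ} (hr : 0 < r) : ∃ x, 0 < x ∧ R x = r := by
  obtain ⟨a, ha, hra⟩ := hR.exists_gt r
  obtain ⟨b, hb, hbr⟩ := hR.exists_lt hr
  exact isPreconnected_Ioi.intermediate_value hb ha hR.continuousOn ⟨hbr.le, hra.le⟩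

end IsBlowUp

/-! ### The scaling relation and its consequences for `F` -/

/-- The properties of the limiting Bernstein transform `H` that the renewal argument uses. -/
structure IsScalingProfile (H : ℝ → ℝ) : Prop where
  map_zero : H 0 = 0
  lt_one : ∀ q, 0 < q → H q < 1
  strictMonoOn : StrictMonoOn H (Ici 0)
  concaveOn : ConcaveOn ℝ (Ici 0) H

/-- The scaling limit in analytic form. Time is encoded by the total mass `u`, `Λ u` is the spatial
scale at that time and `φ u q` is the solution at that time with initial value `q * Λ u`; `F` turns
the semiflow into a translation and `φ u` is asymptotic to `u • H`. -/
structure IsScalingRelation (F H Λ : ℝ → ℝ) (φ : ℝ → ℝ → ℝ) : Prop where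
  scale_pos : ∀ u, 0 < u → 0 < Λ u
  pos : ∀ u, 0 < u → ∀ q, 0 < q → 0 < φ u q
  map_eq : ∀ u, 0 < u → ∀ q, 0 < q → F (φ u q) = F u + F (q * Λ u)
  tendsto_div : ∀ q, 0 < q → Tendsto (fun u => φ u q / u) (𝓝[>] 0) (𝓝 (H q))

lemma IsScalingProfile.pos {H : ℝ → ℝ} (hH : IsScalingProfile H) {q : ℝ} (hq : 0 < q) :
    0 < H q := by
  simpa only [hH.map_zero] using hH.strictMonoOn self_mem_Ici (mem_Ici.2 hq.le) hq

namespace IsDescentTime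

variable {F : ℝ → ℝ} {s : ℝ}

lemma secant_le (hF : IsDescentTime F s) {u a b : ℝ} (hu : 0 < u) (hb : 0 < b) (hba : b ≤ a)
    (ha : a < 1) : (1 - b) * (F (u * a) - F u) ≤ (1 - a) * (F (u * b) - F u) := by
  have hsec : (F (u * b) - F u) / (u * b - u) ≤ (F (u * a) - F u) / (u * a - u) :=
    hF.convexOn.secant_mono hu (mul_pos hu hb) (mul_pos hu (hb.trans_le hba))
      (by nlinarith) (by nlinarith) (by gcongr)
  have h1a : u * a - u < 0 := by nlinarith
  have h1b : u * b - u < 0 := by nlinarith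
  rw [div_le_iff_of_neg h1b, div_mul_eq_mul_div, div_le_iff_of_neg h1a] at hsec
  refine le_of_mul_le_mul_left (?_ : u * _ ≤ u * _) hu
  linarith

lemma eventually_exists_sub_eq (hF : IsDescentTime F s) {a δ : ℝ} (ha : 0 < a) (ha1 : a < 1)
    (hδ : 0 < δ) : ∀ᶠ v in 𝓝[>] 0, ∃ u ∈ Ioc 0 δ, F (u * a) - F u = F v := by
  filter_upwards [hF.tendsto_atTop.eventually_ge_atTop (F (δ * a) - F δ)] with v hv
  obtain ⟨w, hvw, hw⟩ := ((hF.tendsto_sub a ha ha1).eventually_ge_atTop (F v)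
    |>.and (Ioc_mem_nhdsGT hδ)).exists
  have hpos : ∀ u ∈ Icc w δ, 0 < u := fun u hu => hw.1.trans_le hu.1
  have hcont : ContinuousOn (fun u => F (u * a) - F u) (Icc w δ) :=
    (hF.continuousOn.comp (by fun_prop) fun u hu => mul_pos (hpos u hu) ha).sub
      (hF.continuousOn.mono hpos)
  obtain ⟨u, hu, hFu⟩ := intermediate_value_Icc' hw.2 hcont ⟨hv, hvw⟩
  exact ⟨u, ⟨hpos u hu, hu.2⟩, hFu⟩

end IsDescentTime

namespace IsScalingRelation

variable {F H Λ : ℝ → ℝ} {φ : ℝ → ℝ → ℝ} {s : ℝ}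

lemma eventually_lt_sub (hφ : IsScalingRelation F H Λ φ) (hF : IsDescentTime F s) {a q : ℝ}
    (ha : 0 < a) (hq : 0 < q) (haH : a < H q) :
    ∀ᶠ u in 𝓝[>] 0, F (q * Λ u) < F (u * a) - F u := by
  filter_upwards [eventually_pos_nhdsGT_zero,
    (hφ.tendsto_div q hq).eventually_const_lt haH] with u hu hlt
  rw [lt_div_iff₀' hu] at hlt
  have := hF.strictAntiOn (mul_pos hu ha) (hφ.pos u hu q hq) hlt
  linarith [hφ.map_eq u hu q hq]

lemma eventually_sub_lt (hφ : IsScalingRelation F H Λ φ) (hF : IsDescentTime F s) {a q : ℝ}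
    (ha : 0 < a) (hq : 0 < q) (haH : H q < a) :
    ∀ᶠ u in 𝓝[>] 0, F (u * a) - F u < F (q * Λ u) := by
  filter_upwards [eventually_pos_nhdsGT_zero,
    (hφ.tendsto_div q hq).eventually_lt_const haH] with u hu hlt
  rw [div_lt_iff₀' hu] at hlt
  have := hF.strictAntiOn (hφ.pos u hu q hq) (mul_pos hu ha) hlt
  linarith [hφ.map_eq u hu q hq]

-- The increment `F (u * H 1) - F u` is comparable with both `F (2⁻¹ * Λ u)` and `F (2 * Λ u)`, and
-- convexity shows that increments over a longer interval are larger by a definite factor.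
lemma eventually_growth (hφ : IsScalingRelation F H Λ φ) (hF : IsDescentTime F s)
    (hH : IsScalingProfile H) :
    ∃ ε, 0 < ε ∧ ∀ᶠ v in 𝓝[>] 0, (1 + ε) * F v ≤ F (v / 4) := by
  have ha : 0 < H 1 := hH.pos one_pos
  have ha1 : H 1 < 1 := hH.lt_one 1 one_pos
  have hHmono : ∀ {p q : ℝ}, 0 < p → p < q → H p < H q := fun hp hpq =>
    hH.strictMonoOn hp.le (hp.trans hpq).le hpq
  obtain ⟨b, hHb, hba⟩ := exists_between (hHmono (p := 2⁻¹) (q := 1) (by norm_num) (by norm_num))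
  have hb : 0 < b := (hH.pos (by norm_num)).trans hHb
  obtain ⟨δ, hδ : 0 < δ, hsmall⟩ := mem_nhdsGT_iff_exists_Ioc_subset.1
    ((hφ.eventually_lt_sub hF ha two_pos (hHmono one_pos one_lt_two)).and
      (hφ.eventually_sub_lt hF hb (by norm_num) hHb))
  refine ⟨(H 1 - b) / (1 - H 1), div_pos (by linarith) (by linarith), ?_⟩
  filter_upwards [eventually_pos_nhdsGT_zero,
    hF.eventually_exists_sub_eq ha ha1 hδ] with v hv ⟨u, hu, hFv⟩
  obtain ⟨hlt, hgt⟩ := hsmall hu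
  have hΛ := hφ.scale_pos u hu.1
  have hvΛ : v < 2 * Λ u :=
    hF.strictAntiOn.antitoneOn.reflect_lt (mul_pos two_pos hΛ) hv (hFv ▸ hlt)
  have hquarter : F (2⁻¹ * Λ u) ≤ F (v / 4) :=
    hF.strictAntiOn.antitoneOn (mem_Ioi.2 (by positivity)) (mem_Ioi.2 (by positivity))
      (by linarith)
  have hsec := hF.secant_le hu.1 hb hba.le ha1
  rw [hFv] at hsec
  have h1a : 0 < 1 - H 1 := by linarith
  refine le_of_mul_le_mul_left ?_ h1a
  calc (1 - H 1) * ((1 + (H 1 - b) / (1 - H 1)) * F v) = (1 - b) * F v := by field_simp; ring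
    _ ≤ (1 - H 1) * (F (u * b) - F u) := hsec
    _ ≤ (1 - H 1) * F (v / 4) := by gcongr; exact hgt.le.trans hquarter

end IsScalingRelation

/-! ### Blow-ups solving Abel's equation are powers -/

lemma IsScalingProfile.antitoneOn_div {H : ℝ → ℝ} (hH : IsScalingProfile H) :
    AntitoneOn (fun q => H q / q) (Ioi 0) := by
  intro p (hp : 0 < p) q (hq : 0 < q) hpq
  have h := hH.concaveOn.neg.secant_mono self_mem_Ici hp.le hq.le hp.ne' hq.ne' hpq
  simp only [Pi.neg_apply, hH.map_zero, neg_zero, sub_zero, neg_div, neg_le_neg_iff] at h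
  exact h

namespace IsBlowUp

variable {R H : ℝ → ℝ} {m : ℝ}

lemma exists_add_one_lt (hR : IsBlowUp R) {κ : ℝ} (hκ : 0 < κ) (hκ1 : κ < 1) :
    ∃ x, 0 < x ∧ 1 + R x < R (κ * x) := by
  by_contra! hle
  have hpow : ∀ (n : ℕ) (x : ℝ), 0 < x → R (κ ^ n * x) ≤ n + R x := by
    intro n
    induction n with
    | zero => intro x _; simp only [pow_zero, one_mul, Nat.cast_zero, zero_add, le_refl]
    | succ n ih =>
      intro x hx
      have hκx := ih (κ * x) (mul_pos hκ hx)
      rw [← mul_assoc, ← pow_succ] at hκx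
      push_cast
      linarith [hle x hx]
  obtain ⟨n, hn⟩ := exists_pow_lt_of_lt_one (show (0 : ℝ) < 1 / 4 by norm_num) hκ1
  obtain ⟨ε, hε, hgrowth⟩ := hR.growth
  obtain ⟨x, hx, hlarge⟩ := hR.exists_gt (n / ε)
  have hquarter : R (x / 4) ≤ R (κ ^ n * x) :=
    hR.antitoneOn (mem_Ioi.2 (by positivity)) (mem_Ioi.2 (by positivity)) (by nlinarith)
  rw [div_lt_iff₀ hε] at hlarge
  linarith [hgrowth x hx, hpow n x hx]

lemma tendsto_profile_div (hR : IsBlowUp R) (hH : IsScalingProfile H) (hm : 0 < m)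
    (habel : ∀ q, 0 < q → R (H q) = 1 + R (m * q)) :
    Tendsto (fun q => H q / q) (𝓝[>] 0) (𝓝 m) := by
  refine tendsto_order.2 ⟨fun c hc => ?_, fun c hc => ?_⟩
  · have hκ : 0 < max (c / m) 2⁻¹ := lt_max_of_lt_right (by norm_num)
    have hκ1 : max (c / m) 2⁻¹ < 1 := max_lt ((div_lt_one hm).2 hc) (by norm_num)
    obtain ⟨x, hx, hlt⟩ := hR.exists_add_one_lt hκ hκ1
    have hxm : 0 < x / m := div_pos hx hm
    have hval := habel (x / m) hxm
    rw [mul_div_cancel₀ x hm.ne'] at hval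
    have hcx : max (c / m) 2⁻¹ * x < H (x / m) :=
      hR.antitoneOn.reflect_lt (hH.pos hxm) (mul_pos hκ hx) (hval ▸ hlt)
    have hcH : c < H (x / m) / (x / m) := by
      rw [lt_div_iff₀ hxm]
      calc c * (x / m) = c / m * x := by ring
        _ ≤ max (c / m) 2⁻¹ * x := by gcongr; exact le_max_left _ _
        _ < H (x / m) := hcx
    filter_upwards [Ioc_mem_nhdsGT hxm] with q hq
    exact hcH.trans_le (hH.antitoneOn_div hq.1 hxm hq.2)
  · filter_upwards [eventually_pos_nhdsGT_zero] with q hq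
    have hlt : H q < m * q :=
      hR.antitoneOn.reflect_lt (mul_pos hm hq) (hH.pos hq) (by linarith [habel q hq])
    exact ((div_lt_iff₀ hq).2 hlt).trans hc

lemma exists_mul_eq_natCast_mul (hH : IsScalingProfile H) (hm : 0 < m)
    (habel : ∀ x, 0 < x → ∀ q, 0 < q → R (x * H q) = R x + R (x * (m * q))) (n : ℕ) :
    ∃ z, 0 < z ∧ ∀ x, 0 < x → R (x * z) = (n + 1 : ℕ) * R x := by
  induction n with
  | zero => exact ⟨1, one_pos, fun x _ => by rw [mul_one, zero_add, Nat.cast_one, one_mul]⟩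
  | succ n ih =>
    obtain ⟨z, hz, hmul⟩ := ih
    refine ⟨H (z / m), hH.pos (div_pos hz hm), fun x hx => ?_⟩
    rw [habel x hx _ (div_pos hz hm), mul_div_cancel₀ z hm.ne', hmul x hx]
    push_cast
    ring

lemma abs_sub_le_of_natCast_mul (hR : IsBlowUp R)
    (hmul : ∀ n : ℕ, ∃ z, 0 < z ∧ ∀ x, 0 < x → R (x * z) = (n + 1 : ℕ) * R x)
    {x y : ℝ} (hx : 0 < x) (hy : 0 < y) : |R (x * y) - R x * R y| ≤ R x := by
  have hval : ∀ {n : ℕ} {z : ℝ}, (∀ x, 0 < x → R (x * z) = n * R x) → R z = n := fun h => by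
    simpa only [one_mul, hR.map_one, mul_one] using h 1 one_pos
  have hlower : ⌊R y⌋₊ * R x ≤ R (x * y) := by
    rcases hn : ⌊R y⌋₊ with _ | n
    · simpa only [Nat.cast_zero, zero_mul] using (hR.pos _ (mul_pos hx hy)).le
    · obtain ⟨z, hz, hzmul⟩ := hmul n
      have hzy : R z ≤ R y := by
        rw [hval hzmul, ← hn]
        exact Nat.floor_le (hR.pos y hy).le
      rw [← hzmul x hx]
      exact hR.antitoneOn (mul_pos hx hy) (mul_pos hx hz)
        (by gcongr; exact (hR.strictAntiOn.le_iff_ge hz hy).1 hzy)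
  have hupper : R (x * y) ≤ (⌊R y⌋₊ + 1) * R x := by
    obtain ⟨z, hz, hzmul⟩ := hmul ⌊R y⌋₊
    have hyz : R y < R z := by
      rw [hval hzmul]
      exact_mod_cast Nat.lt_floor_add_one (R y)
    have := hR.antitoneOn (mul_pos hx hz) (mul_pos hx hy)
      (by gcongr; exact (hR.antitoneOn.reflect_lt hy hz hyz).le)
    rw [hzmul x hx] at this
    exact_mod_cast this
  rw [abs_le]
  constructor <;>
    nlinarith [hR.pos x hx, Nat.floor_le (hR.pos y hy).le, Nat.lt_floor_add_one (R y)]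

-- The previous bound is applied to `y * z` with `R (· * z) = n * R`, and divided by `n → ∞`.
lemma map_mul_of_natCast_mul (hR : IsBlowUp R)
    (hmul : ∀ n : ℕ, ∃ z, 0 < z ∧ ∀ x, 0 < x → R (x * z) = (n + 1 : ℕ) * R x)
    {x y : ℝ} (hx : 0 < x) (hy : 0 < y) : R (x * y) = R x * R y := by
  by_contra hne
  have hgap : 0 < |R (x * y) - R x * R y| := abs_pos.2 (sub_ne_zero.2 hne)
  obtain ⟨n, hn⟩ := exists_nat_gt (R x / |R (x * y) - R x * R y|)
  obtain ⟨z, hz, hzmul⟩ := hmul n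
  have hbound := hR.abs_sub_le_of_natCast_mul hmul hx (mul_pos hy hz)
  rw [← mul_assoc, hzmul _ (mul_pos hx hy), hzmul y hy, mul_left_comm, ← mul_sub, abs_mul,
    Nat.abs_cast] at hbound
  rw [div_lt_iff₀ hgap] at hn
  push_cast at hbound
  linarith

end IsBlowUp

lemma exists_eq_rpow_of_map_mul {R : ℝ → ℝ} (hpos : ∀ x, 0 < x → 0 < R x)
    (hcont : ContinuousOn R (Ioi 0))
    (hmul : ∀ x y, 0 < x → 0 < y → R (x * y) = R x * R y) :
    ∃ ρ : ℝ, ∀ x, 0 < x → R x = x ^ ρ := by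
  have hone : R 1 = 1 := by
    have h := hmul 1 1 one_pos one_pos
    rw [one_mul] at h
    exact (mul_eq_left₀ (hpos 1 one_pos).ne').1 h.symm
  let L : ℝ →+ ℝ :=
    { toFun := fun s => Real.log (R (Real.exp s))
      map_zero' := by rw [Real.exp_zero, hone, Real.log_one]
      map_add' := fun s t => by
        rw [Real.exp_add, hmul _ _ (Real.exp_pos s) (Real.exp_pos t),
          Real.log_mul (hpos _ (Real.exp_pos s)).ne' (hpos _ (Real.exp_pos t)).ne'] }
  have hL : Continuous L :=
    (hcont.comp_continuous Real.continuous_exp Real.exp_pos).log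
      fun s => (hpos _ (Real.exp_pos s)).ne'
  refine ⟨L 1, fun x hx => ?_⟩
  have hlin : L (Real.log x) = Real.log x * L 1 := by
    simpa only [smul_eq_mul, mul_one] using map_real_smul L hL (Real.log x) 1
  rw [Real.rpow_def_of_pos hx, ← hlin]
  change R x = Real.exp (Real.log (R (Real.exp (Real.log x))))
  rw [Real.exp_log hx, Real.exp_log (hpos x hx)]

namespace IsScalingRelation

variable {F H Λ R : ℝ → ℝ} {φ : ℝ → ℝ → ℝ} {s m : ℝ} {𝓕 : Filter ℝ}

lemma isBlowUp [NeBot 𝓕] (hφ : IsScalingRelation F H Λ φ) (hF : IsDescentTime F s)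
    (hH : IsScalingProfile H) (h𝓕 : 𝓕 ≤ 𝓝[>] 0) (hR : HasDilationLimit F 𝓕 R) : IsBlowUp R :=
  hF.isBlowUp h𝓕 hR (hφ.eventually_growth hF hH)

lemma tendsto_map_scale_div [NeBot 𝓕] (hφ : IsScalingRelation F H Λ φ) (hF : IsDescentTime F s)
    (hH : IsScalingProfile H) (h𝓕 : 𝓕 ≤ 𝓝[>] 0) (hR : HasDilationLimit F 𝓕 R) {q : ℝ}
    (hq : 0 < q) : Tendsto (fun u => F (q * Λ u) / F u) 𝓕 (𝓝 (R (H q) - 1)) := by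
  have hRc := (hφ.isBlowUp hF hH h𝓕 hR).continuousOn.continuousAt (Ioi_mem_nhds (hH.pos hq))
  refine ((hR.tendsto_comp h𝓕 hF.pos hF.strictAntiOn.antitoneOn (hH.pos hq) hRc
    ((hφ.tendsto_div q hq).mono_left h𝓕)).sub_const 1).congr' ?_
  filter_upwards [h𝓕 eventually_pos_nhdsGT_zero] with u hu
  rw [hφ.map_eq u hu q hq, add_div, div_self (hF.pos u hu).ne', add_sub_cancel_left]

lemma exists_tendsto_scale_div [NeBot 𝓕] (hφ : IsScalingRelation F H Λ φ)
    (hF : IsDescentTime F s) (hH : IsScalingProfile H) (h𝓕 : 𝓕 ≤ 𝓝[>] 0)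
    (hR : HasDilationLimit F 𝓕 R) : ∃ l, 0 < l ∧ Tendsto (fun u => Λ u / u) 𝓕 (𝓝 l) := by
  have hB := hφ.isBlowUp hF hH h𝓕 hR
  have hR1 : 1 < R (H 1) := by
    simpa only [hB.map_one] using
      hB.strictAntiOn (hH.pos one_pos) (mem_Ioi.2 one_pos) (hH.lt_one 1 one_pos)
  obtain ⟨l, hl, hRl⟩ := hB.exists_eq (sub_pos.2 hR1)
  have hlim := hφ.tendsto_map_scale_div hF hH h𝓕 hR one_pos
  simp only [one_mul] at hlim
  rw [← hRl] at hlim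
  exact ⟨l, hl, hR.tendsto_div_of_tendsto_comp h𝓕 hF.pos hF.strictAntiOn.antitoneOn hl
    hB.strictAntiOn (h𝓕 (eventually_pos_nhdsGT_zero.mono hφ.scale_pos)) hlim⟩

lemma abel_of_tendsto_scale_div [NeBot 𝓕] (hφ : IsScalingRelation F H Λ φ)
    (hF : IsDescentTime F s) (hH : IsScalingProfile H) (h𝓕 : 𝓕 ≤ 𝓝[>] 0)
    (hR : HasDilationLimit F 𝓕 R) (hm : 0 < m) (hΛ : Tendsto (fun u => Λ u / u) 𝓕 (𝓝 m))
    {q : ℝ} (hq : 0 < q) : R (H q) = 1 + R (m * q) := by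
  have hRc := (hφ.isBlowUp hF hH h𝓕 hR).continuousOn.continuousAt (Ioi_mem_nhds (mul_pos hm hq))
  have hscale : Tendsto (fun u => q * Λ u / u) 𝓕 (𝓝 (m * q)) := by
    simpa only [mul_div_assoc, mul_comm m q] using hΛ.const_mul q
  have hlim := hR.tendsto_comp h𝓕 hF.pos hF.strictAntiOn.antitoneOn (mul_pos hm hq) hRc hscale
  linarith [tendsto_nhds_unique hlim (hφ.tendsto_map_scale_div hF hH h𝓕 hR hq)]

lemma exists_tendsto_profile_div (hφ : IsScalingRelation F H Λ φ) (hF : IsDescentTime F s)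
    (hH : IsScalingProfile H) : ∃ m, 0 < m ∧ Tendsto (fun q => H q / q) (𝓝[>] 0) (𝓝 m) := by
  have h𝓤 : ↑(Ultrafilter.of (𝓝[>] (0 : ℝ))) ≤ 𝓝[>] (0 : ℝ) := Ultrafilter.of_le _
  obtain ⟨R, hR⟩ := hF.exists_hasDilationLimit _ h𝓤
  obtain ⟨m, hm, hΛ⟩ := hφ.exists_tendsto_scale_div hF hH h𝓤 hR
  exact ⟨m, hm, (hφ.isBlowUp hF hH h𝓤 hR).tendsto_profile_div hH hm
    fun _ hq => hφ.abel_of_tendsto_scale_div hF hH h𝓤 hR hm hΛ hq⟩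

-- `H` has a single derivative at `0`, so the limit of the scale does not depend on the filter.
lemma tendsto_scale_div [NeBot 𝓕] (hφ : IsScalingRelation F H Λ φ) (hF : IsDescentTime F s)
    (hH : IsScalingProfile H) (h𝓕 : 𝓕 ≤ 𝓝[>] 0) (hR : HasDilationLimit F 𝓕 R)
    (hHm : Tendsto (fun q => H q / q) (𝓝[>] 0) (𝓝 m)) :
    Tendsto (fun u => Λ u / u) 𝓕 (𝓝 m) := by
  obtain ⟨l, hl, hΛ⟩ := hφ.exists_tendsto_scale_div hF hH h𝓕 hR
  have hHl := (hφ.isBlowUp hF hH h𝓕 hR).tendsto_profile_div hH hl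
    fun _ hq => hφ.abel_of_tendsto_scale_div hF hH h𝓕 hR hl hΛ hq
  rwa [tendsto_nhds_unique hHm hHl]

-- Abel's equation for the filter dilated by `x`, along which `y ↦ R (x * y) / R x` is the limit.
lemma map_mul_profile [NeBot 𝓕] (hφ : IsScalingRelation F H Λ φ) (hF : IsDescentTime F s)
    (hH : IsScalingProfile H) (h𝓕 : 𝓕 ≤ 𝓝[>] 0) (hR : HasDilationLimit F 𝓕 R) (hm : 0 < m)
    (hHm : Tendsto (fun q => H q / q) (𝓝[>] 0) (𝓝 m)) {x q : ℝ} (hx : 0 < x) (hq : 0 < q) :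
    R (x * H q) = R x + R (x * (m * q)) := by
  have hRx := (hφ.isBlowUp hF hH h𝓕 hR).pos x hx
  have h𝓕x : 𝓕.map (· * x) ≤ 𝓝[>] 0 := (tendsto_mul_const_nhdsGT_zero hx).mono_left h𝓕
  have hRdil := hR.dilate (hF.eventually_ne h𝓕) hx hRx.ne'
  have habel := hφ.abel_of_tendsto_scale_div hF hH h𝓕x hRdil hm
    (hφ.tendsto_scale_div hF hH h𝓕x hRdil hHm) hq
  field_simp at habel
  rwa [mul_assoc] at habel

lemma eq_rpow_of_hasDilationLimit [NeBot 𝓕] (hφ : IsScalingRelation F H Λ φ)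
    (hF : IsDescentTime F s) (hH : IsScalingProfile H) (h𝓕 : 𝓕 ≤ 𝓝[>] 0)
    (hR : HasDilationLimit F 𝓕 R) (hm : 0 < m)
    (hHm : Tendsto (fun q => H q / q) (𝓝[>] 0) (𝓝 m)) {x : ℝ} (hx : 0 < x) :
    R x = x ^ Real.logb (H m⁻¹) 2 := by
  have hB := hφ.isBlowUp hF hH h𝓕 hR
  have hmul : ∀ x y, 0 < x → 0 < y → R (x * y) = R x * R y := fun x y hx hy =>
    hB.map_mul_of_natCast_mul (IsBlowUp.exists_mul_eq_natCast_mul hH hm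
      fun x hx q hq => hφ.map_mul_profile hF hH h𝓕 hR hm hHm hx hq) hx hy
  obtain ⟨ρ, hρ⟩ := exists_eq_rpow_of_map_mul hB.pos hB.continuousOn hmul
  have hH0 : 0 < H m⁻¹ := hH.pos (inv_pos.2 hm)
  have hval : H m⁻¹ ^ ρ = 2 := by
    have habel := hφ.abel_of_tendsto_scale_div hF hH h𝓕 hR hm
      (hφ.tendsto_scale_div hF hH h𝓕 hR hHm) (inv_pos.2 hm)
    rwa [mul_inv_cancel₀ hm.ne', hB.map_one, one_add_one_eq_two, hρ _ hH0] at habel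
  rw [hρ x hx, (Real.logb_eq_iff_rpow_eq hH0 (hH.lt_one _ (inv_pos.2 hm)).ne two_pos).2 hval]

lemma regularlyVaryingAtZero (hφ : IsScalingRelation F H Λ φ) (hF : IsDescentTime F s)
    (hH : IsScalingProfile H) (hm : 0 < m)
    (hHm : Tendsto (fun q => H q / q) (𝓝[>] 0) (𝓝 m)) :
    RegularlyVaryingAtZero F (Real.logb (H m⁻¹) 2) := by
  intro x hx
  refine tendsto_iff_ultrafilter _ _ _ |>.2 fun 𝓤 h𝓤 => ?_
  obtain ⟨R, hR⟩ := hF.exists_hasDilationLimit 𝓤 h𝓤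
  simpa only [hφ.eq_rpow_of_hasDilationLimit hF hH h𝓤 hR hm hHm hx] using hR x hx

end IsScalingRelation

lemma IsDescentTime.neg_index_le {F : ℝ → ℝ} {s ρ : ℝ} (hF : IsDescentTime F s)
    (hreg : RegularlyVaryingAtZero F ρ) (hρ : ρ < 0) : -ρ ≤ s := by
  have hmem : (2⁻¹ : ℝ) ^ ρ ∈ uIcc 1 (2⁻¹ ^ (-s)) :=
    hF.mem_uIcc_of_hasDilationLimit le_rfl hreg (by norm_num)
  have hone : (1 : ℝ) < 2⁻¹ ^ ρ :=
    Real.one_lt_rpow_of_pos_of_lt_one_of_neg (by norm_num) (by norm_num) hρ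
  have hle := (le_max_iff.1 hmem.2).resolve_left hone.not_ge
  rw [Real.rpow_le_rpow_left_iff_of_base_lt_one (by norm_num) (by norm_num)] at hle
  linarith

theorem IsScalingRelation.exists_index {F H Λ : ℝ → ℝ} {φ : ℝ → ℝ → ℝ} {s : ℝ}
    (hφ : IsScalingRelation F H Λ φ) (hF : IsDescentTime F s) (hH : IsScalingProfile H) :
    ∃ α m, 0 < α ∧ α ≤ s ∧ RegularlyVaryingAtZero F (-α) ∧
      Tendsto (fun u => Λ u / u) (𝓝[>] 0) (𝓝 m) ∧ Tendsto (fun q => H q / q) (𝓝[>] 0) (𝓝 m) ∧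
      ∀ q, 0 < q → H q ^ (-α) = 1 + (m * q) ^ (-α) := by
  obtain ⟨m, hm, hHm⟩ := hφ.exists_tendsto_profile_div hF hH
  have hreg := hφ.regularlyVaryingAtZero hF hH hm hHm
  have hmi := inv_pos.2 hm
  have hneg : Real.logb (H m⁻¹) 2 < 0 :=
    Real.logb_neg_of_base_lt_one (hH.pos hmi) (hH.lt_one _ hmi) one_lt_two
  have hΛ := hφ.tendsto_scale_div hF hH le_rfl hreg hHm
  refine ⟨-Real.logb (H m⁻¹) 2, m, neg_pos.2 hneg, hF.neg_index_le hreg hneg, ?_, hΛ, hHm,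
    fun q hq => ?_⟩ <;> rw [neg_neg]
  · exact hreg
  · exact hφ.abel_of_tendsto_scale_div hF hH le_rfl hreg hm hΛ hq

/-! ### Monotone density -/

-- Convexity squeezes the derivative between chord slopes, which converge to those of `x ^ ρ`.
lemma tendsto_mul_deriv_div_of_convexOn {F f : ℝ → ℝ} {ρ : ℝ} (hconv : ConvexOn ℝ (Ioi 0) F)
    (hF : ∀ u, 0 < u → 0 < F u) (hderiv : ∀ u, 0 < u → HasDerivAt F (f u) u)
    (hreg : RegularlyVaryingAtZero F ρ) :
    Tendsto (fun u => u * f u / F u) (𝓝[>] 0) (𝓝 ρ) := by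
  have hslope : Tendsto (slope (fun x : ℝ => x ^ ρ) 1) (𝓝[≠] 1) (𝓝 ρ) := by
    simpa only [Real.one_rpow, mul_one] using
      hasDerivAt_iff_tendsto_slope.1 (Real.hasDerivAt_rpow_const (p := ρ) (Or.inl one_ne_zero))
  have hchord : ∀ c, 0 < c → Tendsto (fun u => u * slope F u (u * c) / F u) (𝓝[>] 0)
      (𝓝 (slope (fun x : ℝ => x ^ ρ) 1 c)) := by
    intro c hc
    rw [slope_def_field, Real.one_rpow]
    refine (((hreg c hc).sub_const 1).div_const (c - 1)).congr' ?_
    filter_upwards [eventually_pos_nhdsGT_zero] with u hu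
    have hFu := (hF u hu).ne'
    rw [slope_def_field, ← mul_sub_one u c]
    field_simp
  refine tendsto_order.2 ⟨fun a ha => ?_, fun a ha => ?_⟩
  · obtain ⟨c, hac, hc : 0 < c, hc1 : c < 1⟩ :=
      (((hslope.mono_left (nhdsLT_le_nhdsNE 1)).eventually_const_lt ha).and
        (Ioo_mem_nhdsLT one_pos)).exists
    filter_upwards [eventually_pos_nhdsGT_zero, (hchord c hc).eventually_const_lt hac] with u hu hlt
    have := hF u hu
    have := hconv.slope_le_of_hasDerivAt (mul_pos hu hc) hu (by nlinarith) (hderiv u hu)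
    rw [slope_comm] at this
    exact hlt.trans_le (by gcongr)
  · obtain ⟨c, hca, hc1 : 1 < c⟩ :=
      (((hslope.mono_left (nhdsGT_le_nhdsNE 1)).eventually_lt_const ha).and
        self_mem_nhdsWithin).exists
    have hc := one_pos.trans hc1
    filter_upwards [eventually_pos_nhdsGT_zero, (hchord c hc).eventually_lt_const hca] with u hu hlt
    have := hF u hu
    have := hconv.le_slope_of_hasDerivAt hu (mul_pos hu hc) (by nlinarith) (hderiv u hu)
    exact lt_of_le_of_lt (by gcongr) hlt

lemma RegularlyVaryingAtZero.of_hasDerivAt_neg_inv {F Ψ : ℝ → ℝ} {α : ℝ}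
    (hreg : RegularlyVaryingAtZero F (-α)) (hα : α ≠ 0) (hconv : ConvexOn ℝ (Ioi 0) F)
    (hF : ∀ u, 0 < u → 0 < F u) (hΨ : ∀ u, 0 < u → 0 < Ψ u)
    (hderiv : ∀ u, 0 < u → HasDerivAt F (-(Ψ u)⁻¹) u) :
    RegularlyVaryingAtZero Ψ (α + 1) := by
  intro x hx
  have hdens := tendsto_mul_deriv_div_of_convexOn hconv hF hderiv hreg
  have hdensx := hdens.comp (tendsto_mul_const_nhdsGT_zero hx)
  have hxα : 0 < x ^ (-α) := Real.rpow_pos_of_pos hx _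
  have hlim := (hdens.const_mul x).div (hdensx.mul (hreg x hx))
    (mul_ne_zero (neg_ne_zero.2 hα) hxα.ne')
  have hval : x * -α / (-α * x ^ (-α)) = x ^ (α + 1) := by
    rw [mul_comm x, mul_div_mul_left _ _ (neg_ne_zero.2 hα), Real.rpow_neg hx.le, div_inv_eq_mul,
      Real.rpow_add_one hx.ne', mul_comm]
  rw [hval] at hlim
  refine hlim.congr' ?_
  filter_upwards [eventually_pos_nhdsGT_zero] with u hu
  have hxu := mul_pos hx hu
  have hFxu := (hF _ hxu).ne'
  have hFu := (hF u hu).ne'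
  have hΨu := (hΨ u hu).ne'
  have hΨxu := (hΨ _ hxu).ne'
  simp only [Function.comp, Pi.div_apply, mul_comm u x]
  field_simp

/-! ### Critical branching mechanisms -/

/-- The features of a critical branching mechanism under Grey's condition that are needed here,
with order of growth at most `p` towards infinity; `p = 2` covers every mechanism of
Lévy–Khintchine form. -/
structure IsCriticalMechanism (Ψ : ℝ → ℝ) (p : ℝ) : Prop where
  pos : ∀ u, 0 < u → 0 < Ψ u
  monotoneOn : MonotoneOn Ψ (Ioi 0)
  continuousOn : ContinuousOn Ψ (Ioi 0)
  rpow_mul_le : ∀ u, 0 < u → ∀ b, 0 < b → b ≤ 1 → b ^ p * Ψ u ≤ Ψ (u * b)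
  tendsto_div : Tendsto (fun u => Ψ u / u) (𝓝[>] 0) (𝓝 0)
  grey : ∃ a, 0 < a ∧ IntegrableOn (fun u => (Ψ u)⁻¹) (Ioi a)

/-- The compensated exponential `e^(-z) - 1 + z`, the Lévy–Khintchine kernel of a critical
mechanism. -/
def compensatedExp (z : ℝ) : ℝ :=
  Real.exp (-z) - 1 + z

/-- The critical branching mechanism in Lévy–Khintchine form with Gaussian coefficient `β` and
Lévy measure `π` (restricted to `(0, ∞)`). -/
def branchingMechanism (β : ℝ) (π : Measure ℝ) (u : ℝ) : ℝ :=
  β * u ^ 2 + ∫ x in Ioi 0, compensatedExp (u * x) ∂π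

section CompensatedExp

@[fun_prop]
lemma continuous_compensatedExp : Continuous compensatedExp := by
  unfold compensatedExp
  fun_prop

lemma hasDerivAt_compensatedExp (z : ℝ) : HasDerivAt compensatedExp (1 - Real.exp (-z)) z := by
  have h := (((hasDerivAt_neg z).exp).sub_const 1).add (hasDerivAt_id z)
  rwa [mul_neg_one, neg_add_eq_sub] at h

lemma compensatedExp_nonneg (z : ℝ) : 0 ≤ compensatedExp z := by
  unfold compensatedExp
  linarith [Real.add_one_le_exp (-z)]

lemma compensatedExp_le_self {z : ℝ} (hz : 0 ≤ z) : compensatedExp z ≤ z := by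
  unfold compensatedExp
  linarith [Real.exp_le_one_iff.2 (neg_nonpos.2 hz)]

lemma compensatedExp_le_sq {z : ℝ} (hz : 0 ≤ z) : compensatedExp z ≤ z ^ 2 := by
  have hexp : Real.exp (-z) * (z + 1) ≤ 1 := by
    calc Real.exp (-z) * (z + 1) ≤ Real.exp (-z) * Real.exp z := by
          gcongr; exact Real.add_one_le_exp z
      _ = 1 := by rw [← Real.exp_add, neg_add_cancel, Real.exp_zero]
  have hcube : 0 ≤ z ^ 3 := by positivity
  unfold compensatedExp
  nlinarith

lemma compensatedExp_mul_le {u c x : ℝ} (hu : 0 ≤ u) (huc : u ≤ c) (hc : 1 ≤ c) (hx : 0 ≤ x) :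
    compensatedExp (u * x) ≤ u * c * min x (x ^ 2) := by
  have hux : 0 ≤ u * x := mul_nonneg hu hx
  rw [mul_min_of_nonneg _ _ (by positivity)]
  refine le_min ((compensatedExp_le_self hux).trans ?_) ((compensatedExp_le_sq hux).trans ?_)
  · gcongr
    exact le_mul_of_one_le_right hu hc
  · rw [mul_pow, sq u]
    gcongr

lemma monotoneOn_compensatedExp : MonotoneOn compensatedExp (Ici 0) := by
  refine monotoneOn_of_hasDerivWithinAt_nonneg (convex_Ici 0)
    continuous_compensatedExp.continuousOn
    (fun z _ => (hasDerivAt_compensatedExp z).hasDerivWithinAt) fun z hz => ?_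
  rw [interior_Ici] at hz
  linarith [Real.exp_le_one_iff.2 (neg_nonpos.2 (le_of_lt hz))]

lemma sq_mul_compensatedExp_le {z b : ℝ} (hz : 0 ≤ z) (hb : 0 ≤ b) (hb1 : b ≤ 1) :
    b ^ 2 * compensatedExp z ≤ compensatedExp (b * z) := by
  have hderiv : ∀ y, HasDerivAt (fun y => compensatedExp (b * y) - b ^ 2 * compensatedExp y)
      (b * (1 - Real.exp (-(b * y))) - b ^ 2 * (1 - Real.exp (-y))) y := by
    intro y
    have h := (hasDerivAt_compensatedExp (b * y)).comp y ((hasDerivAt_id y).const_mul b)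
    rw [mul_one, mul_comm] at h
    exact h.sub ((hasDerivAt_compensatedExp y).const_mul _)
  have hmono : MonotoneOn (fun y => compensatedExp (b * y) - b ^ 2 * compensatedExp y) (Ici 0) := by
    refine monotoneOn_of_hasDerivWithinAt_nonneg (convex_Ici 0) (by fun_prop)
      (fun y _ => (hderiv y).hasDerivWithinAt) fun y _ => ?_
    have hconv := convexOn_exp.2 (mem_univ (-y)) (mem_univ 0) hb (sub_nonneg.2 hb1) (by ring)
    simp only [smul_eq_mul, mul_zero, add_zero, mul_neg, Real.exp_zero] at hconv
    nlinarith
  have h := hmono self_mem_Ici hz hz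
  have hzero : compensatedExp 0 = 0 := by
    rw [compensatedExp, neg_zero, Real.exp_zero, sub_self, add_zero]
  simp only [mul_zero, hzero, sub_self] at h
  linarith

end CompensatedExp

section BranchingMechanism

variable {β : ℝ} {π : Measure ℝ}

lemma integrableOn_min_sq (hπ : ∫⁻ x in Ioi (0 : ℝ), ENNReal.ofReal (min x (x ^ 2)) ∂π < ⊤) :
    IntegrableOn (fun x : ℝ => min x (x ^ 2)) (Ioi 0) π := by
  refine ⟨(by fun_prop : Measurable fun x : ℝ => min x (x ^ 2)).aestronglyMeasurable, ?_⟩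
  rwa [hasFiniteIntegral_iff_ofReal]
  exact ae_restrict_of_forall_mem measurableSet_Ioi fun x hx => le_min (le_of_lt hx) (sq_nonneg x)

lemma aestronglyMeasurable_compensatedExp (u : ℝ) (ν : Measure ℝ) :
    AEStronglyMeasurable (fun x => compensatedExp (u * x)) ν :=
  (by fun_prop : Continuous fun x => compensatedExp (u * x)).aestronglyMeasurable

lemma ae_norm_compensatedExp_le {u c : ℝ} (hu : 0 ≤ u) (huc : u ≤ c) (hc : 1 ≤ c) :
    ∀ᵐ x ∂π.restrict (Ioi 0), ‖compensatedExp (u * x)‖ ≤ u * c * min x (x ^ 2) :=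
  ae_restrict_of_forall_mem measurableSet_Ioi fun x (hx : 0 < x) => by
    rw [Real.norm_of_nonneg (compensatedExp_nonneg _)]
    exact compensatedExp_mul_le hu huc hc hx.le

lemma integrableOn_compensatedExp (hπ : IntegrableOn (fun x : ℝ => min x (x ^ 2)) (Ioi 0) π)
    {u : ℝ} (hu : 0 ≤ u) : IntegrableOn (fun x => compensatedExp (u * x)) (Ioi 0) π :=
  (hπ.const_mul (u * max u 1)).mono' (aestronglyMeasurable_compensatedExp u _)
    (ae_norm_compensatedExp_le hu (le_max_left _ _) (le_max_right _ _))

lemma monotoneOn_branchingMechanism (hβ : 0 ≤ β)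
    (hπ : IntegrableOn (fun x : ℝ => min x (x ^ 2)) (Ioi 0) π) :
    MonotoneOn (branchingMechanism β π) (Ioi 0) := by
  intro u (hu : 0 < u) v (hv : 0 < v) huv
  unfold branchingMechanism
  gcongr ?_ + ?_
  · gcongr
  · refine setIntegral_mono_on (integrableOn_compensatedExp hπ hu.le)
      (integrableOn_compensatedExp hπ hv.le) measurableSet_Ioi fun x (hx : 0 < x) => ?_
    exact monotoneOn_compensatedExp (mul_pos hu hx).le (mul_pos hv hx).le (by gcongr)

lemma sq_mul_branchingMechanism_le (hπ : IntegrableOn (fun x : ℝ => min x (x ^ 2)) (Ioi 0) π)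
    {u b : ℝ} (hu : 0 ≤ u) (hb : 0 ≤ b) (hb1 : b ≤ 1) :
    b ^ 2 * branchingMechanism β π u ≤ branchingMechanism β π (u * b) := by
  unfold branchingMechanism
  rw [mul_add, ← integral_const_mul]
  gcongr ?_ + ?_
  · exact le_of_eq (by ring)
  · refine setIntegral_mono_on ((integrableOn_compensatedExp hπ hu).const_mul _)
      (integrableOn_compensatedExp hπ (mul_nonneg hu hb)) measurableSet_Ioi fun x (hx : 0 < x) => ?_
    rw [mul_comm u b, mul_assoc]
    exact sq_mul_compensatedExp_le (mul_nonneg hu hx.le) hb hb1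

lemma continuousOn_branchingMechanism
    (hπ : IntegrableOn (fun x : ℝ => min x (x ^ 2)) (Ioi 0) π) :
    ContinuousOn (branchingMechanism β π) (Ioi 0) := by
  refine ContinuousOn.add (by fun_prop) fun u (hu : 0 < u) =>
    ContinuousAt.continuousWithinAt ?_
  refine continuousAt_of_dominated (bound := fun x => (u + 1) * (u + 1) * min x (x ^ 2))
    (Eventually.of_forall fun v => aestronglyMeasurable_compensatedExp v _) ?_ (hπ.const_mul _)
    (ae_of_all _ fun x => by fun_prop)
  filter_upwards [Ioo_mem_nhds hu (lt_add_one u)] with v hv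
  refine (ae_norm_compensatedExp_le hv.1.le hv.2.le (by linarith)).mp ?_
  refine ae_restrict_of_forall_mem measurableSet_Ioi fun x (hx : 0 < x) hle => hle.trans ?_
  have := hv.2.le
  gcongr

lemma tendsto_branchingMechanism_div (hπ : IntegrableOn (fun x : ℝ => min x (x ^ 2)) (Ioi 0) π) :
    Tendsto (fun u => branchingMechanism β π u / u) (𝓝[>] 0) (𝓝 0) := by
  have hjump : Tendsto (fun u => ∫ x in Ioi 0, compensatedExp (u * x) / u ∂π) (𝓝[>] 0)
      (𝓝 (∫ _ in Ioi (0 : ℝ), (0 : ℝ) ∂π)) := by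
    refine tendsto_integral_filter_of_dominated_convergence (fun x => min x (x ^ 2))
      (Eventually.of_forall fun u => by
        simp only [div_eq_mul_inv]
        exact (aestronglyMeasurable_compensatedExp u _).mul_const _) ?_ hπ ?_
    · filter_upwards [Ioc_mem_nhdsGT one_pos] with u hu
      filter_upwards [ae_norm_compensatedExp_le hu.1.le hu.2 le_rfl] with x hx
      rw [norm_div, Real.norm_of_nonneg hu.1.le, div_le_iff₀ hu.1]
      linarith
    · refine ae_of_all _ fun x => ?_
      have hd : HasDerivAt (fun u => compensatedExp (u * x)) 0 0 := by
        have h := (hasDerivAt_compensatedExp (0 * x)).comp 0 ((hasDerivAt_id (0 : ℝ)).mul_const x)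
        simpa [Function.comp_def] using h
      refine (hd.tendsto_slope.mono_left (nhdsGT_le_nhdsNE 0)).congr fun u => ?_
      simp [slope_def_field, compensatedExp]
  have hgauss : Tendsto (fun u => β * u) (𝓝[>] 0) (𝓝 0) := by
    have h : Tendsto (fun u => β * u) (𝓝 0) (𝓝 (β * 0)) := tendsto_id.const_mul β
    rw [mul_zero] at h
    exact h.mono_left nhdsWithin_le_nhds
  have hsum := hgauss.add hjump
  rw [integral_zero, add_zero] at hsum
  refine hsum.congr' ?_
  filter_upwards [eventually_pos_nhdsGT_zero] with u hu
  rw [branchingMechanism, integral_div, add_div]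
  field_simp

lemma isCriticalMechanism_of_eqOn {Ψ : ℝ → ℝ} (hβ : 0 ≤ β)
    (hπ : IntegrableOn (fun x : ℝ => min x (x ^ 2)) (Ioi 0) π)
    (hΨ : EqOn Ψ (branchingMechanism β π) (Ioi 0)) (htop : Tendsto Ψ atTop atTop)
    (hgrey : ∃ a, 0 < a ∧ IntegrableOn (fun u => (Ψ u)⁻¹) (Ioi a)) :
    IsCriticalMechanism Ψ 2 := by
  have hscale : ∀ u, 0 < u → ∀ b, 0 < b → b ≤ 1 → b ^ (2 : ℝ) * Ψ u ≤ Ψ (u * b) := by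
    intro u hu b hb hb1
    rw [Real.rpow_two, hΨ hu, hΨ (mul_pos hu hb)]
    exact sq_mul_branchingMechanism_le hπ hu.le hb.le hb1
  refine ⟨fun u hu => ?_, (monotoneOn_branchingMechanism hβ hπ).congr hΨ.symm,
    (continuousOn_branchingMechanism hπ).congr hΨ, hscale,
    (tendsto_branchingMechanism_div (β := β) hπ).congr' ?_, hgrey⟩
  · obtain ⟨v, hv, huv⟩ := ((htop.eventually_gt_atTop 0).and (eventually_ge_atTop u)).exists
    have hv0 := hu.trans_le huv
    have h := hscale v hv0 (u / v) (by positivity) ((div_le_one hv0).2 huv)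
    rw [mul_div_cancel₀ _ hv0.ne'] at h
    exact lt_of_lt_of_le (by positivity) h
  · filter_upwards [eventually_pos_nhdsGT_zero] with u hu
    rw [hΨ hu]

end BranchingMechanism

/-! ### The descent time of a critical mechanism -/

/-- The time `∫_u^∞ dv / Ψ(v)` that the flow `y' = -Ψ(y)` takes to come down from infinity
to `u`. -/
def descentTime (Ψ : ℝ → ℝ) (u : ℝ) : ℝ :=
  ∫ v in Ioi u, (Ψ v)⁻¹

namespace IsCriticalMechanism

variable {Ψ : ℝ → ℝ} {p u : ℝ}

lemma continuousOn_inv (hΨ : IsCriticalMechanism Ψ p) :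
    ContinuousOn (fun v => (Ψ v)⁻¹) (Ioi 0) :=
  hΨ.continuousOn.inv₀ fun v hv => (hΨ.pos v hv).ne'

lemma integrableOn_inv (hΨ : IsCriticalMechanism Ψ p) (hu : 0 < u) :
    IntegrableOn (fun v => (Ψ v)⁻¹) (Ioi u) := by
  obtain ⟨a, -, hint⟩ := hΨ.grey
  have hcompact : IntegrableOn (fun v => (Ψ v)⁻¹) (Icc u a) :=
    (hΨ.continuousOn_inv.mono fun v hv => hu.trans_le hv.1).integrableOn_Icc
  refine (hcompact.union hint).mono_set fun v (hv : u < v) => ?_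
  exact (le_or_gt v a).imp (fun hva => ⟨hv.le, hva⟩) id

lemma hasDerivAt_descentTime (hΨ : IsCriticalMechanism Ψ p) (hu : 0 < u) :
    HasDerivAt (descentTime Ψ) (-(Ψ u)⁻¹) u := by
  have hint := hΨ.integrableOn_inv (half_pos hu)
  have hIoc : ∀ w, u / 2 < w → IntervalIntegrable (fun v => (Ψ v)⁻¹) volume (u / 2) w := by
    intro w hw
    rw [intervalIntegrable_iff_integrableOn_Ioc_of_le hw.le]
    exact hint.mono_set Ioc_subset_Ioi_self
  have hderiv : HasDerivAt (fun w => ∫ v in (u / 2)..w, (Ψ v)⁻¹) (Ψ u)⁻¹ u :=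
    intervalIntegral.integral_hasDerivAt_right (hIoc u (half_lt_self hu))
      (hΨ.continuousOn_inv.stronglyMeasurableAtFilter isOpen_Ioi u hu)
      (hΨ.continuousOn_inv.continuousAt (Ioi_mem_nhds hu))
  refine (hderiv.const_sub (descentTime Ψ (u / 2))).congr_of_eventuallyEq ?_
  filter_upwards [Ioi_mem_nhds (half_lt_self hu)] with w hw
  exact eq_sub_of_add_eq' (intervalIntegral.integral_interval_add_Ioi' (hIoc w hw)
    (hint.mono_set (Ioi_subset_Ioi (le_of_lt hw))))

lemma strictAntiOn_descentTime (hΨ : IsCriticalMechanism Ψ p) :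
    StrictAntiOn (descentTime Ψ) (Ioi 0) := by
  refine strictAntiOn_of_hasDerivWithinAt_neg (f' := fun u => -(Ψ u)⁻¹) (convex_Ioi 0)
    (fun u hu => (hΨ.hasDerivAt_descentTime hu).continuousAt.continuousWithinAt)
    (fun u hu => ?_) fun u hu => ?_ <;> rw [interior_Ioi] at hu
  · exact (hΨ.hasDerivAt_descentTime hu).hasDerivWithinAt
  · exact neg_lt_zero.2 (inv_pos.2 (hΨ.pos u hu))

lemma descentTime_pos (hΨ : IsCriticalMechanism Ψ p) (hu : 0 < u) : 0 < descentTime Ψ u := by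
  have hu1 : 0 < u + 1 := by linarith
  calc 0 ≤ descentTime Ψ (u + 1) := setIntegral_nonneg measurableSet_Ioi fun v hv =>
        (inv_pos.2 (hΨ.pos v (hu1.trans hv))).le
    _ < descentTime Ψ u := hΨ.strictAntiOn_descentTime hu hu1 (lt_add_one u)

lemma convexOn_descentTime (hΨ : IsCriticalMechanism Ψ p) :
    ConvexOn ℝ (Ioi 0) (descentTime Ψ) := by
  refine MonotoneOn.convexOn_of_deriv (convex_Ioi 0)
    (fun u hu => (hΨ.hasDerivAt_descentTime hu).continuousAt.continuousWithinAt) ?_ ?_ <;>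
    rw [interior_Ioi]
  · exact fun u hu => (hΨ.hasDerivAt_descentTime hu).differentiableAt.differentiableWithinAt
  · intro u (hu : 0 < u) v (hv : 0 < v) huv
    rw [(hΨ.hasDerivAt_descentTime hu).deriv, (hΨ.hasDerivAt_descentTime hv).deriv]
    have hpos := hΨ.pos u hu
    have hle := hΨ.monotoneOn hu hv huv
    gcongr

lemma descentTime_mul_le (hΨ : IsCriticalMechanism Ψ p) (hu : 0 < u) {b : ℝ} (hb : 0 < b)
    (hb1 : b ≤ 1) : descentTime Ψ (u * b) ≤ b ^ (-(p - 1)) * descentTime Ψ u := by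
  have hint : IntegrableOn (fun v => (Ψ (b * v))⁻¹) (Ioi u) := by
    rw [integrableOn_Ioi_comp_mul_left_iff (fun v => (Ψ v)⁻¹) u hb]
    exact hΨ.integrableOn_inv (mul_pos hb hu)
  have hle : ∫ v in Ioi u, (Ψ (b * v))⁻¹ ≤ ∫ v in Ioi u, b ^ (-p) * (Ψ v)⁻¹ := by
    refine setIntegral_mono_on hint ((hΨ.integrableOn_inv hu).const_mul _) measurableSet_Ioi
      fun v hv => ?_
    have hv0 : 0 < v := hu.trans hv
    rw [Real.rpow_neg hb.le, ← mul_inv, mul_comm b v]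
    exact inv_anti₀ (mul_pos (Real.rpow_pos_of_pos hb p) (hΨ.pos v hv0))
      (hΨ.rpow_mul_le v hv0 b hb hb1)
  calc descentTime Ψ (u * b) = b * ∫ v in Ioi u, (Ψ (b * v))⁻¹ := by
        rw [integral_comp_mul_left_Ioi (fun v => (Ψ v)⁻¹) u hb, smul_eq_mul,
          mul_inv_cancel_left₀ hb.ne', mul_comm u b, descentTime]
    _ ≤ b * ∫ v in Ioi u, b ^ (-p) * (Ψ v)⁻¹ := by gcongr
    _ = b ^ (-(p - 1)) * descentTime Ψ u := by
        rw [integral_const_mul, ← mul_assoc, neg_sub, sub_eq_add_neg, Real.rpow_add hb,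
          Real.rpow_one, descentTime]

lemma tendsto_descentTime_sub (hΨ : IsCriticalMechanism Ψ p) {b : ℝ} (hb : 0 < b) (hb1 : b < 1) :
    Tendsto (fun u => descentTime Ψ (u * b) - descentTime Ψ u) (𝓝[>] 0) atTop := by
  have hdiv : Tendsto (fun u => Ψ u / u) (𝓝[>] 0) (𝓝[>] 0) :=
    tendsto_nhdsWithin_iff.2 ⟨hΨ.tendsto_div, eventually_pos_nhdsGT_zero.mono fun u hu =>
      div_pos (hΨ.pos u hu) hu⟩
  refine tendsto_atTop_mono' _ ?_
    ((tendsto_inv_nhdsGT_zero.comp hdiv).const_mul_atTop (sub_pos.2 hb1))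
  filter_upwards [eventually_pos_nhdsGT_zero] with u hu
  have hub : u * b < u := mul_lt_of_lt_one_right hu hb1
  have hslope := hΨ.convexOn_descentTime.slope_le_of_hasDerivAt (mul_pos hu hb) hu hub
    (hΨ.hasDerivAt_descentTime hu)
  rw [slope_def_field, div_le_iff₀ (sub_pos.2 hub)] at hslope
  calc (1 - b) * (Ψ u / u)⁻¹ = (Ψ u)⁻¹ * (u - u * b) := by rw [inv_div]; ring
    _ ≤ descentTime Ψ (u * b) - descentTime Ψ u := by linarith

lemma isDescentTime (hΨ : IsCriticalMechanism Ψ p) : IsDescentTime (descentTime Ψ) (p - 1) where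
  pos _ := hΨ.descentTime_pos
  strictAntiOn := hΨ.strictAntiOn_descentTime
  convexOn := hΨ.convexOn_descentTime
  le_rpow_mul _ hu _ := hΨ.descentTime_mul_le hu
  tendsto_sub _ := hΨ.tendsto_descentTime_sub

end IsCriticalMechanism

/-! ### The Bernstein transform -/

lemma setIntegral_pos_of_forall_pos {X : Type*} [MeasurableSpace X] {ν : Measure X} {s : Set X}
    {f : X → ℝ} (hs : MeasurableSet s) (hf : IntegrableOn f s ν) (hpos : ∀ x ∈ s, 0 < f x)
    (hν : ν s ≠ 0) : 0 < ∫ x in s, f x ∂ν := by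
  have hsupp : s ⊆ Function.support f := fun x hx => (hpos x hx).ne'
  rw [setIntegral_pos_iff_support_of_nonneg_ae
    (ae_restrict_of_forall_mem hs fun x hx => (hpos x hx).le) hf,
    inter_eq_right.2 hsupp]
  exact pos_iff_ne_zero.2 hν

/-- The Bernstein transform `q ↦ ∫ (1 - e^(-q x)) ν(dx)` of the restriction of `ν` to `(0, ∞)`. -/
def bernsteinTransform (ν : Measure ℝ) (q : ℝ) : ℝ :=
  ∫ x in Ioi 0, (1 - Real.exp (-(q * x))) ∂ν

section BernsteinTransform

variable {ν : Measure ℝ} {q : ℝ}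

@[simp]
lemma bernsteinTransform_zero : bernsteinTransform ν 0 = 0 := by
  simp [bernsteinTransform]

lemma one_sub_exp_nonneg {x : ℝ} (hq : 0 ≤ q) (hx : 0 ≤ x) : 0 ≤ 1 - Real.exp (-(q * x)) :=
  sub_nonneg.2 (Real.exp_le_one_iff.2 (neg_nonpos.2 (mul_nonneg hq hx)))

lemma abs_one_sub_exp_le_one {x : ℝ} (hq : 0 ≤ q) (hx : 0 ≤ x) :
    |1 - Real.exp (-(q * x))| ≤ 1 := by
  rw [abs_of_nonneg (one_sub_exp_nonneg hq hx)]
  exact sub_le_self _ (Real.exp_pos _).le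

lemma aestronglyMeasurable_one_sub_exp :
    AEStronglyMeasurable (fun x => 1 - Real.exp (-(q * x))) ν :=
  (by fun_prop : Continuous fun x => 1 - Real.exp (-(q * x))).aestronglyMeasurable

lemma integrableOn_one_sub_exp [IsFiniteMeasure ν] (hq : 0 ≤ q) :
    IntegrableOn (fun x => 1 - Real.exp (-(q * x))) (Ioi 0) ν :=
  (integrable_const 1).mono' aestronglyMeasurable_one_sub_exp <|
    ae_restrict_of_forall_mem measurableSet_Ioi fun _ hx => abs_one_sub_exp_le_one hq (le_of_lt hx)

lemma bernsteinTransform_nonneg (hq : 0 ≤ q) : 0 ≤ bernsteinTransform ν q :=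
  setIntegral_nonneg measurableSet_Ioi fun _ hx => one_sub_exp_nonneg hq (le_of_lt hx)

lemma bernsteinTransform_le [IsFiniteMeasure ν] (hq : 0 ≤ q) :
    bernsteinTransform ν q ≤ ν.real (Ioi 0) := by
  rw [← setIntegral_one_eq_measureReal]
  exact setIntegral_mono_on (integrableOn_one_sub_exp hq) (integrable_const 1) measurableSet_Ioi
    fun x _ => sub_le_self _ (Real.exp_pos _).le

lemma strictMonoOn_bernsteinTransform [IsFiniteMeasure ν] (hν : ν (Ioi 0) ≠ 0) :
    StrictMonoOn (bernsteinTransform ν) (Ici 0) := by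
  intro p (hp : 0 ≤ p) q (hq : 0 ≤ q) hpq
  rw [← sub_pos, bernsteinTransform, bernsteinTransform,
    ← integral_sub (integrableOn_one_sub_exp hq) (integrableOn_one_sub_exp hp)]
  refine setIntegral_pos_of_forall_pos measurableSet_Ioi
    ((integrableOn_one_sub_exp hq).sub (integrableOn_one_sub_exp hp)) (fun x (hx : 0 < x) => ?_) hν
  have hexp : Real.exp (-(q * x)) < Real.exp (-(p * x)) := by gcongr
  linarith

lemma bernsteinTransform_pos [IsFiniteMeasure ν] (hν : ν (Ioi 0) ≠ 0) (hq : 0 < q) :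
    0 < bernsteinTransform ν q := by
  simpa only [bernsteinTransform_zero] using
    strictMonoOn_bernsteinTransform hν self_mem_Ici (mem_Ici.2 hq.le) hq

lemma concaveOn_bernsteinTransform [IsFiniteMeasure ν] :
    ConcaveOn ℝ (Ici 0) (bernsteinTransform ν) := by
  refine integral_concaveOn_of_integrand_ae (f := fun x q => 1 - Real.exp (-(q * x)))
    (convex_Ici 0) (ae_of_all _ fun x => ?_) fun q hq => integrableOn_one_sub_exp hq
  have hconv := convexOn_exp.comp_linearMap (LinearMap.mulRight ℝ (-x))
  have hexp : ConvexOn ℝ (Ici 0) fun q => Real.exp (-(q * x)) := by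
    refine (hconv.subset (subset_univ _) (convex_Ici 0)).congr fun q _ => ?_
    rw [Function.comp_apply, LinearMap.mulRight_apply, mul_neg]
  exact (concaveOn_const 1 (convex_Ici 0)).sub hexp

lemma tendsto_bernsteinTransform_atTop [IsFiniteMeasure ν] :
    Tendsto (bernsteinTransform ν) atTop (𝓝 (ν.real (Ioi 0))) := by
  rw [← setIntegral_one_eq_measureReal]
  refine tendsto_integral_filter_of_dominated_convergence (fun _ => 1)
    (Eventually.of_forall fun q => aestronglyMeasurable_one_sub_exp) ?_ (integrable_const 1) ?_
  · filter_upwards [eventually_ge_atTop 0] with q hq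
    exact ae_restrict_of_forall_mem measurableSet_Ioi fun x hx =>
      abs_one_sub_exp_le_one hq (le_of_lt hx)
  · refine ae_restrict_of_forall_mem measurableSet_Ioi fun x hx => ?_
    have hexp := (Real.tendsto_exp_neg_atTop_nhds_zero.comp
      (tendsto_id.atTop_mul_const (mem_Ioi.1 hx))).const_sub 1
    rwa [sub_zero] at hexp

lemma tendsto_one_sub_exp_div (x : ℝ) :
    Tendsto (fun q => (1 - Real.exp (-(q * x))) / q) (𝓝[>] 0) (𝓝 x) := by
  have hderiv : HasDerivAt (fun q => 1 - Real.exp (-(q * x))) x 0 := by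
    simpa using (((hasDerivAt_id (0 : ℝ)).mul_const x).neg.exp).const_sub 1
  refine (hderiv.tendsto_slope.mono_left (nhdsGT_le_nhdsNE 0)).congr fun q => ?_
  simp [slope_def_field]

lemma integrableOn_id_of_tendsto_bernsteinTransform_div [IsFiniteMeasure ν] {m : ℝ}
    (h : Tendsto (fun q => bernsteinTransform ν q / q) (𝓝[>] 0) (𝓝 m)) :
    IntegrableOn (fun x => x) (Ioi 0) ν := by
  obtain ⟨q, hq⟩ := exists_seq_tendsto (𝓝[>] (0 : ℝ))
  refine integrable_of_tendsto (G := fun n x => (1 - Real.exp (-(q n * x))) / q n)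
    (ae_of_all _ fun x => (tendsto_one_sub_exp_div x).comp hq)
    (fun n => by
      simp only [div_eq_mul_inv]
      exact aestronglyMeasurable_one_sub_exp.mul_const _) ?_
  have hlim : Tendsto (fun n => ∫⁻ x in Ioi 0, ‖(1 - Real.exp (-(q n * x))) / q n‖ₑ ∂ν) atTop
      (𝓝 (ENNReal.ofReal m)) := by
    refine ((ENNReal.continuous_ofReal.tendsto m).comp (h.comp hq)).congr' ?_
    filter_upwards [hq.eventually eventually_pos_nhdsGT_zero] with n hn
    rw [Function.comp_apply, Function.comp_apply, bernsteinTransform, ← integral_div,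
      ← ofReal_integral_norm_eq_lintegral_enorm ((integrableOn_one_sub_exp hn.le).div_const _)]
    refine congrArg _ (setIntegral_congr_fun measurableSet_Ioi fun x (hx : 0 < x) => ?_)
    exact (Real.norm_of_nonneg (div_nonneg (one_sub_exp_nonneg hn.le hx.le) hn.le)).symm
  rw [hlim.liminf_eq]
  exact ENNReal.ofReal_ne_top

lemma tendsto_bernsteinTransform_div (hν : IntegrableOn (fun x => x) (Ioi 0) ν) :
    Tendsto (fun q => bernsteinTransform ν q / q) (𝓝[>] 0) (𝓝 (∫ x in Ioi 0, x ∂ν)) := by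
  simp only [bernsteinTransform, ← integral_div]
  refine tendsto_integral_filter_of_dominated_convergence (fun x => x)
    (Eventually.of_forall fun q => by
      simp only [div_eq_mul_inv]
      exact aestronglyMeasurable_one_sub_exp.mul_const _) ?_ hν
    (ae_of_all _ tendsto_one_sub_exp_div)
  filter_upwards [eventually_pos_nhdsGT_zero] with q hq
  refine ae_restrict_of_forall_mem measurableSet_Ioi fun x (hx : 0 < x) => ?_
  rw [Real.norm_of_nonneg (div_nonneg (one_sub_exp_nonneg hq.le hx.le) hq.le), div_le_iff₀ hq]
  linarith [Real.add_one_le_exp (-(q * x))]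

end BernsteinTransform

/-! ### Fundamental solutions and their scaling limits -/

lemma flow_pos {Ψ y : ℝ → ℝ} (hΨ : ∀ u, 0 < u → 0 < Ψ u) (hnonneg : ∀ t, 0 < t → 0 ≤ y t)
    (hy : ∀ t, 0 < t → HasDerivAt y (-Ψ (y t)) t) (hne : ∃ᶠ t in atTop, y t ≠ 0) {t : ℝ}
    (ht : 0 < t) : 0 < y t := by
  refine (hnonneg t ht).lt_of_ne fun hzero => ?_
  have hmin : IsLocalMin y t := by
    filter_upwards [Ioi_mem_nhds ht] with s hs
    exact hzero ▸ hnonneg s hs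
  have hΨ0 : Ψ 0 = 0 := by
    simpa only [neg_eq_zero, ← hzero] using hmin.hasDerivAt_eq_zero (hy t ht)
  have hanti : AntitoneOn y (Ioi 0) := by
    refine antitoneOn_of_hasDerivWithinAt_nonpos (f' := fun s => -Ψ (y s)) (convex_Ioi 0)
      (fun s hs => (hy s hs).continuousAt.continuousWithinAt) (fun s hs => ?_) fun s hs => ?_ <;>
      rw [interior_Ioi] at hs
    · exact (hy s hs).hasDerivWithinAt
    · rcases (hnonneg s hs).eq_or_lt with h | h
      · rw [← h, hΨ0, neg_zero]
      · exact neg_nonpos.2 (hΨ _ h).le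
  obtain ⟨s, hs, hts⟩ := (hne.and_eventually (eventually_ge_atTop t)).exists
  have hs0 := ht.trans_le hts
  exact hs (le_antisymm (hzero ▸ hanti ht hs0 hts) (hnonneg s hs0))

lemma IsCriticalMechanism.descentTime_flow {Ψ y : ℝ → ℝ} {p q t : ℝ}
    (hΨ : IsCriticalMechanism Ψ p) (hq : 0 < q) (hpos : ∀ t, 0 < t → 0 < y t)
    (hy : ∀ t, 0 < t → HasDerivAt y (-Ψ (y t)) t) (hinit : Tendsto y (𝓝[>] 0) (𝓝 q))
    (ht : 0 < t) : descentTime Ψ (y t) = t + descentTime Ψ q := by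
  have hderiv : ∀ t, 0 < t → HasDerivAt (fun t => descentTime Ψ (y t) - t) 0 t := by
    intro t ht
    have h := ((hΨ.hasDerivAt_descentTime (hpos t ht)).comp t (hy t ht)).sub (hasDerivAt_id t)
    rwa [neg_mul_neg, inv_mul_cancel₀ (hΨ.pos _ (hpos t ht)).ne', sub_self] at h
  obtain ⟨c, hc⟩ := isOpen_Ioi.exists_is_const_of_deriv_eq_zero isPreconnected_Ioi
    (fun t ht => (hderiv t ht).differentiableAt.differentiableWithinAt)
    fun t ht => (hderiv t ht).deriv
  have hlim : Tendsto (fun t => descentTime Ψ (y t) - t) (𝓝[>] 0) (𝓝 (descentTime Ψ q - 0)) :=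
    ((hΨ.hasDerivAt_descentTime hq).continuousAt.tendsto.comp hinit).sub
      (tendsto_id.mono_left nhdsWithin_le_nhds)
  have hconst : Tendsto (fun t => descentTime Ψ (y t) - t) (𝓝[>] 0) (𝓝 c) :=
    tendsto_const_nhds.congr' (eventually_pos_nhdsGT_zero.mono fun s hs => (hc s hs).symm)
  have hcq := tendsto_nhds_unique hlim hconst
  have hct := hc t ht
  linarith

/-- A family of finite measures `μ t`, `t > 0`, whose Bernstein transforms `Φ(t, q)` solve
`∂ₜ Φ = -Ψ(Φ)` with initial value `Φ(0⁺, q) = q`. -/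
structure IsFundamentalSolution (Ψ : ℝ → ℝ) (μ : ℝ → Measure ℝ) : Prop where
  isFiniteMeasure : ∀ t, 0 < t → IsFiniteMeasure (μ t)
  hasDerivAt : ∀ q, 0 < q → ∀ t, 0 < t →
    HasDerivAt (fun t => bernsteinTransform (μ t) q) (-Ψ (bernsteinTransform (μ t) q)) t
  tendsto_init : ∀ q, 0 < q → Tendsto (fun t => bernsteinTransform (μ t) q) (𝓝[>] 0) (𝓝 q)

/-- The measures `μ t`, dilated by `lam t` and normalised, converge to `ν` as `t → ∞` in the sense
of Bernstein transforms. -/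
def HasScalingLimit (μ : ℝ → Measure ℝ) (lam : ℝ → ℝ) (ν : Measure ℝ) : Prop :=
  ∀ q, 0 < q → Tendsto (fun t => bernsteinTransform (μ t) (q * lam t) / (μ t).real (Ioi 0)) atTop
    (𝓝 (bernsteinTransform ν q))

namespace IsFundamentalSolution

variable {Ψ : ℝ → ℝ} {p : ℝ} {μ : ℝ → Measure ℝ}

lemma bernsteinTransform_pos (hμ : IsFundamentalSolution Ψ μ) (hΨ : IsCriticalMechanism Ψ p)
    (hmass : ∃ᶠ t in atTop, μ t (Ioi 0) ≠ 0) {q t : ℝ} (hq : 0 < q) (ht : 0 < t) :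
    0 < bernsteinTransform (μ t) q := by
  refine flow_pos hΨ.pos (fun t _ => bernsteinTransform_nonneg hq.le) (hμ.hasDerivAt q hq) ?_ ht
  refine (hmass.and_eventually (eventually_gt_atTop 0)).mono fun s hs => ?_
  have := hμ.isFiniteMeasure s hs.2
  exact (_root_.bernsteinTransform_pos hs.1 hq).ne'

lemma descentTime_bernsteinTransform (hμ : IsFundamentalSolution Ψ μ)
    (hΨ : IsCriticalMechanism Ψ p) (hmass : ∃ᶠ t in atTop, μ t (Ioi 0) ≠ 0) {q t : ℝ} (hq : 0 < q)
    (ht : 0 < t) : descentTime Ψ (bernsteinTransform (μ t) q) = t + descentTime Ψ q :=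
  hΨ.descentTime_flow hq (fun _ => hμ.bernsteinTransform_pos hΨ hmass hq) (hμ.hasDerivAt q hq)
    (hμ.tendsto_init q hq) ht

lemma measureReal_pos (hμ : IsFundamentalSolution Ψ μ) (hΨ : IsCriticalMechanism Ψ p)
    (hmass : ∃ᶠ t in atTop, μ t (Ioi 0) ≠ 0) {t : ℝ} (ht : 0 < t) : 0 < (μ t).real (Ioi 0) := by
  have := hμ.isFiniteMeasure t ht
  exact (hμ.bernsteinTransform_pos hΨ hmass one_pos ht).trans_le (bernsteinTransform_le zero_le_one)

lemma descentTime_measureReal (hμ : IsFundamentalSolution Ψ μ) (hΨ : IsCriticalMechanism Ψ p)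
    (hmass : ∃ᶠ t in atTop, μ t (Ioi 0) ≠ 0) {t : ℝ} (ht : 0 < t) :
    descentTime Ψ ((μ t).real (Ioi 0)) = t := by
  have := hμ.isFiniteMeasure t ht
  have hleft := (hΨ.hasDerivAt_descentTime (hμ.measureReal_pos hΨ hmass ht)).continuousAt.tendsto
    |>.comp tendsto_bernsteinTransform_atTop
  have hright : Tendsto (fun q => t + descentTime Ψ q) atTop (𝓝 (t + 0)) :=
    (tendsto_integral_Ioi_zero tendsto_id).const_add t
  rw [add_zero] at hright
  refine tendsto_nhds_unique hleft (hright.congr' ?_)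
  filter_upwards [eventually_gt_atTop 0] with q hq
  exact (hμ.descentTime_bernsteinTransform hΨ hmass hq ht).symm

lemma measureReal_descentTime (hμ : IsFundamentalSolution Ψ μ) (hΨ : IsCriticalMechanism Ψ p)
    (hmass : ∃ᶠ t in atTop, μ t (Ioi 0) ≠ 0) {u : ℝ} (hu : 0 < u) :
    (μ (descentTime Ψ u)).real (Ioi 0) = u :=
  hΨ.strictAntiOn_descentTime.injOn (hμ.measureReal_pos hΨ hmass (hΨ.descentTime_pos hu)) hu
    (hμ.descentTime_measureReal hΨ hmass (hΨ.descentTime_pos hu))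

lemma tendsto_measureReal (hμ : IsFundamentalSolution Ψ μ) (hΨ : IsCriticalMechanism Ψ p)
    (hmass : ∃ᶠ t in atTop, μ t (Ioi 0) ≠ 0) :
    Tendsto (fun t => (μ t).real (Ioi 0)) atTop (𝓝[>] 0) := by
  rw [(nhdsGT_basis (0 : ℝ)).tendsto_right_iff]
  intro a ha
  filter_upwards [eventually_gt_atTop 0, eventually_gt_atTop (descentTime Ψ a)] with t ht hat
  have hpos := hμ.measureReal_pos hΨ hmass ht
  rw [← hμ.descentTime_measureReal hΨ hmass ht,
    hΨ.strictAntiOn_descentTime.lt_iff_gt ha hpos] at hat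
  exact ⟨hpos, hat⟩

lemma isScalingRelation (hμ : IsFundamentalSolution Ψ μ) (hΨ : IsCriticalMechanism Ψ p)
    (hmass : ∃ᶠ t in atTop, μ t (Ioi 0) ≠ 0) {lam : ℝ → ℝ} (hlam : ∀ t, 0 < t → 0 < lam t)
    {ν : Measure ℝ} (hlim : HasScalingLimit μ lam ν) :
    IsScalingRelation (descentTime Ψ) (bernsteinTransform ν) (fun u => lam (descentTime Ψ u))
      fun u q => bernsteinTransform (μ (descentTime Ψ u)) (q * lam (descentTime Ψ u)) where
  scale_pos u hu := hlam _ (hΨ.descentTime_pos hu)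
  pos u hu q hq := hμ.bernsteinTransform_pos hΨ hmass
    (mul_pos hq (hlam _ (hΨ.descentTime_pos hu))) (hΨ.descentTime_pos hu)
  map_eq u hu q hq := hμ.descentTime_bernsteinTransform hΨ hmass
    (mul_pos hq (hlam _ (hΨ.descentTime_pos hu))) (hΨ.descentTime_pos hu)
  tendsto_div q hq := by
    refine ((hlim q hq).comp hΨ.isDescentTime.tendsto_atTop).congr' ?_
    filter_upwards [eventually_pos_nhdsGT_zero] with u hu
    rw [Function.comp_apply, hμ.measureReal_descentTime hΨ hmass hu]

end IsFundamentalSolution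

namespace HasScalingLimit

variable {μ : ℝ → Measure ℝ} {lam : ℝ → ℝ} {ν : Measure ℝ}

lemma frequently_measure_ne_zero [IsFiniteMeasure ν] (hlim : HasScalingLimit μ lam ν)
    (hν : ν (Ioi 0) ≠ 0) : ∃ᶠ t in atTop, μ t (Ioi 0) ≠ 0 := by
  refine Eventually.frequently ?_
  filter_upwards [(hlim 1 one_pos).eventually_ne (bernsteinTransform_pos hν one_pos).ne'] with t ht
  exact fun h => ht (by rw [measureReal_def, h, ENNReal.toReal_zero, div_zero])

lemma measureReal_le_one [IsFiniteMeasure ν] (hlim : HasScalingLimit μ lam ν)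
    (hlam : ∀ t, 0 < t → 0 < lam t) (hμ : ∀ t, 0 < t → IsFiniteMeasure (μ t)) :
    ν.real (Ioi 0) ≤ 1 := by
  refine le_of_tendsto tendsto_bernsteinTransform_atTop ?_
  filter_upwards [eventually_gt_atTop 0] with q hq
  refine le_of_tendsto (hlim q hq) ?_
  filter_upwards [eventually_gt_atTop 0] with t ht
  have := hμ t ht
  exact div_le_one_of_le₀ (bernsteinTransform_le (mul_pos hq (hlam t ht)).le) measureReal_nonneg

lemma of_forall_bounded_continuousOn
    (hlim : ∀ f : ℝ → ℝ, ContinuousOn f (Ioi 0) → (∃ M, ∀ x ∈ Ioi (0 : ℝ), |f x| ≤ M) →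
      Tendsto (fun t => ((μ t).real (Ioi 0))⁻¹ * ∫ x in Ioi 0, f (lam t * x) ∂(μ t)) atTop
        (𝓝 (∫ x in Ioi 0, f x ∂ν))) : HasScalingLimit μ lam ν := by
  intro q hq
  refine (hlim (fun x => 1 - Real.exp (-(q * x))) (by fun_prop)
    ⟨1, fun x hx => abs_one_sub_exp_le_one hq.le (le_of_lt hx)⟩).congr fun t => ?_
  simp only [bernsteinTransform, mul_assoc, div_eq_inv_mul]

end HasScalingLimit

lemma isScalingProfile_bernsteinTransform {ν : Measure ℝ} [IsFiniteMeasure ν]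
    (hν : ν (Ioi 0) ≠ 0) (hν1 : ν.real (Ioi 0) ≤ 1) : IsScalingProfile (bernsteinTransform ν) where
  map_zero := bernsteinTransform_zero
  lt_one q hq := by
    have hq1 : 0 ≤ q + 1 := by linarith
    calc bernsteinTransform ν q < bernsteinTransform ν (q + 1) :=
          strictMonoOn_bernsteinTransform hν (mem_Ici.2 hq.le) hq1 (lt_add_one q)
      _ ≤ 1 := (bernsteinTransform_le hq1).trans hν1
  strictMonoOn := strictMonoOn_bernsteinTransform hν
  concaveOn := concaveOn_bernsteinTransform

theorem fundamental_solution_scaling_limit_general {Ψ : ℝ → ℝ} {p : ℝ}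
    (hΨ : IsCriticalMechanism Ψ p) {μ : ℝ → Measure ℝ} (hμ : IsFundamentalSolution Ψ μ)
    {lam : ℝ → ℝ} (hlam : ∀ t, 0 < t → 0 < lam t) {ν : Measure ℝ} [IsFiniteMeasure ν]
    (hν : ν (Ioi 0) ≠ 0) (hlim : HasScalingLimit μ lam ν) :
    ∃ γ, 1 < γ ∧ γ ≤ p ∧ RegularlyVaryingAtZero Ψ γ ∧ IntegrableOn (fun x => x) (Ioi 0) ν ∧
      Tendsto (fun t => lam t / (μ t).real (Ioi 0)) atTop (𝓝 (∫ x in Ioi 0, x ∂ν)) ∧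
      ∀ q, 0 < q → bernsteinTransform ν q =
        (1 + ((∫ x in Ioi 0, x ∂ν) * q) ^ (-(γ - 1))) ^ (-(1 / (γ - 1))) := by
  have hmass := hlim.frequently_measure_ne_zero hν
  obtain ⟨α, m, hα, hαp, hreg, hscale, hderiv, hprofile⟩ :=
    (hμ.isScalingRelation hΨ hmass hlam hlim).exists_index hΨ.isDescentTime
      (isScalingProfile_bernsteinTransform hν (hlim.measureReal_le_one hlam hμ.isFiniteMeasure))
  have hint := integrableOn_id_of_tendsto_bernsteinTransform_div hderiv
  obtain rfl := tendsto_nhds_unique hderiv (tendsto_bernsteinTransform_div hint)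
  refine ⟨α + 1, by linarith, by linarith, ?_, hint, ?_, fun q hq => ?_⟩
  · exact .of_hasDerivAt_neg_inv hreg hα.ne' hΨ.convexOn_descentTime (fun _ => hΨ.descentTime_pos)
      hΨ.pos fun _ => hΨ.hasDerivAt_descentTime
  · refine (hscale.comp (hμ.tendsto_measureReal hΨ hmass)).congr' ?_
    filter_upwards [eventually_gt_atTop 0] with t ht
    rw [Function.comp_apply, hμ.descentTime_measureReal hΨ hmass ht]
  · rw [add_sub_cancel_right, ← hprofile q hq,
      ← Real.rpow_mul (bernsteinTransform_pos hν hq).le, neg_mul_neg, mul_one_div_cancel hα.ne',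
      Real.rpow_one]

/-- if the fundamental solution `(μ_t)` of the generalized
Smoluchowski equation (for a critical branching mechanism `Ψ` satisfying
Grey's condition) admits a nondegenerate scaling limit
`μ_t(λ(t)⁻¹ dx)/⟨μ_t,1⟩ → μ̂`, then `Ψ` is regularly varying at `0` with some
index `γ ∈ (1,2]`, `m₁ = ∫ x μ̂(dx) < ∞`, `λ(t)/⟨μ_t,1⟩ → m₁`, and `μ̂` is the
generalized Mittag-Leffler law `F_{γ,1}` scaled by `m₁`. -/
theorem fundamental_solution_scaling_limit
    (Ψ : ℝ → ℝ) (β : ℝ) (π : Measure ℝ)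
    (hβ : 0 ≤ β)
    (hπfin : ∫⁻ x in Ioi (0:ℝ), ENNReal.ofReal (min x (x ^ 2)) ∂π < ⊤)
    (hΨ : ∀ u : ℝ, 0 < u →
      Ψ u = β * u ^ 2 + ∫ x in Ioi (0:ℝ), (Real.exp (-(u * x)) - 1 + u * x) ∂π)
    (hGrey₁ : Tendsto Ψ atTop atTop)
    (hGrey₂ : ∃ a : ℝ, 0 < a ∧ IntegrableOn (fun u => (Ψ u)⁻¹) (Ioi a))
    (μ : ℝ → Measure ℝ)
    (hfin : ∀ t : ℝ, 0 < t → IsFiniteMeasure (μ t))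
    (hconc : ∀ t : ℝ, 0 < t → μ t (Iic 0) = 0)
    (hode : ∀ q : ℝ, 0 < q → ∀ t : ℝ, 0 < t →
      HasDerivAt (fun u => ∫ x in Ioi (0:ℝ), (1 - Real.exp (-(q * x))) ∂(μ u))
        (-Ψ (∫ x in Ioi (0:ℝ), (1 - Real.exp (-(q * x))) ∂(μ t))) t)
    (hinit : ∀ q : ℝ, 0 < q →
      Tendsto (fun t => ∫ x in Ioi (0:ℝ), (1 - Real.exp (-(q * x))) ∂(μ t))
        (nhdsWithin 0 (Ioi 0)) (nhds q))
    (lam : ℝ → ℝ) (hlam : ∀ t : ℝ, 0 < t → 0 < lam t)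
    (μhat : Measure ℝ) (hμhatp : IsProbabilityMeasure μhat) (hμhatc : μhat (Iic 0) = 0)
    (hlim : ∀ f : ℝ → ℝ, ContinuousOn f (Ioi 0) →
      (∃ M : ℝ, ∀ x ∈ Ioi (0:ℝ), |f x| ≤ M) →
      Tendsto (fun t => (((μ t) (Ioi 0)).toReal)⁻¹ *
          ∫ x in Ioi (0:ℝ), f (lam t * x) ∂(μ t)) atTop
        (nhds (∫ x in Ioi (0:ℝ), f x ∂μhat))) :
    ∃ γ : ℝ, 1 < γ ∧ γ ≤ 2 ∧
      (∀ x : ℝ, 0 < x →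
        Tendsto (fun u => Ψ (u * x) / Ψ u) (nhdsWithin 0 (Ioi 0)) (nhds (x ^ γ))) ∧
      IntegrableOn (fun x => x) (Ioi 0) μhat ∧
      Tendsto (fun t => lam t / ((μ t) (Ioi 0)).toReal) atTop
        (nhds (∫ x in Ioi (0:ℝ), x ∂μhat)) ∧
      (∀ q : ℝ, 0 < q →
        ∫ x in Ioi (0:ℝ), (1 - Real.exp (-(q * x))) ∂μhat
          = (1 + ((∫ x in Ioi (0:ℝ), x ∂μhat) * q) ^ (-(γ - 1))) ^ (-(1 / (γ - 1)))) := by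
  have hmech := isCriticalMechanism_of_eqOn hβ (integrableOn_min_sq hπfin) hΨ hGrey₁ hGrey₂
  have hmass : μhat (Ioi 0) ≠ 0 := by
    rw [← compl_Iic, (prob_compl_eq_one_iff measurableSet_Iic).2 hμhatc]
    exact one_ne_zero
  exact fundamental_solution_scaling_limit_general hmech ⟨hfin, hode, hinit⟩ hlam hmass
    (.of_forall_bounded_continuousOn hlim)
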